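/- arXiv:math/0408204 — 3 statements merged into one kernel-verified Lean document; each statement's English description precedes it below -/
import Mathlib

section
/- (Sundquist) Let n ≥ 1 and let x_1,...,x_{2n}, a_1,...,a_{2n} be variables. Then Pf[ (a_i − a_j)/(1 + x_i x_j) ]_{1≤i<j≤2n} = U^n(X;A) / Π_{1≤i<j≤2n}(1 + x_i x_j), where U^n(X;A) = Σ_{λ∈P_n} Σ_{μ∈P_n} a_{λ,μ}(X;A), the sum over pairs of partitions in P_n, the set of partitions of Frobenius form (α_1,...,α_r | α_1+1,...,α_r+1) with α_r ≤ n−1. -/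
open Finset

def pfMatchings (n : ℕ) : Finset (Equiv.Perm (Fin (2 * n))) :=
  Finset.univ.filter (fun σ =>
    (∀ i : Fin n, σ ⟨2 * i.1, by have := i.2; omega⟩ < σ ⟨2 * i.1 + 1, by have := i.2; omega⟩) ∧
    (∀ i j : Fin n, i < j →
      σ ⟨2 * i.1, by have := i.2; omega⟩ < σ ⟨2 * j.1, by have := j.2; omega⟩))

def pf {R : Type*} [CommRing R] {n : ℕ} (A : Matrix (Fin (2 * n)) (Fin (2 * n)) R) : R :=
  ∑ σ ∈ pfMatchings n,
    ((Equiv.Perm.sign σ : ℤ) : R) *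
      ∏ i : Fin n,
        A (σ ⟨2 * i.1, by have := i.2; omega⟩) (σ ⟨2 * i.1 + 1, by have := i.2; omega⟩)

/-- `V^n(X,Y;A,B)`: the determinant of the `2n × 2n` matrix whose `(i,j)` entry
(0-indexed columns) is `a_i x_i^{n−1−j} y_i^j` for `j < n` and
`b_i x_i^{2n−1−j} y_i^{j−n}` for `n ≤ j < 2n`. -/
def Vdet {R : Type*} [CommRing R] (n : ℕ) (x y a b : Fin (2 * n) → R) : R :=
  Matrix.det (Matrix.of fun i j : Fin (2 * n) =>
    if (j : ℕ) < n then a i * x i ^ (n - 1 - (j : ℕ)) * y i ^ (j : ℕ)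
    else b i * x i ^ (2 * n - 1 - (j : ℕ)) * y i ^ ((j : ℕ) - n))


def altDet {R : Type*} [CommRing R] (n : ℕ) (α β : Fin n → ℕ)
    (x a : Fin (2 * n) → R) : R :=
  Matrix.det (Matrix.of fun i j : Fin (2 * n) =>
    if h : (j : ℕ) < n then a i * x i ^ α ⟨j, h⟩
    else x i ^ β ⟨(j : ℕ) - n, by have := j.2; omega⟩)

/-- `𝒫_n`, encoded as antitone functions `Fin n → Fin n` (partitions with at most `n`
parts, each part `≤ n−1`) such that every diagonal hook has leg = arm + 1; i.e.
partitions of Frobenius form `(α₁,…,α_r | α₁+1,…,α_r+1)` fitting in `n` rows. -/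
def frobeniusSet (n : ℕ) : Finset (Fin n → Fin n) :=
  Finset.univ.filter (fun l =>
    (∀ i j : Fin n, i ≤ j → l j ≤ l i) ∧
    ∀ i : Fin n, (i : ℕ) + 1 ≤ (l i : ℕ) →
      (Finset.univ.filter (fun j : Fin n => (i : ℕ) + 1 ≤ (l j : ℕ))).card = (l i : ℕ) + 1)

/-- `U^n(X;A) = Σ_{λ,μ ∈ 𝒫_n} a_{λ+δ, μ+δ}(X;A)` (the alternant convention:
column exponents `λ_j + n − j`, 1-indexed). -/
def Un {R : Type*} [CommRing R] (n : ℕ) (x a : Fin (2 * n) → R) : R :=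
  ∑ lam ∈ frobeniusSet n, ∑ mu ∈ frobeniusSet n,
    altDet n (fun j => (lam j : ℕ) + (n - 1 - (j : ℕ)))
      (fun j => (mu j : ℕ) + (n - 1 - (j : ℕ))) x a

/-!
Put `H p q = a p / (1 + x p * x q)`, so that the Pfaffian is that of `H - Hᵀ`. Expanding every
entry of `H - Hᵀ` sums over all ways to order each pair of each perfect matching; listing the
pairs by increasing first element instead of increasing least element, and collecting the terms
with the same set of first elements, turns the Pfaffian into a signed sum of the minors of `H`
that have complementary sets of rows and columns. By Cauchy's formula each minor, multiplied by
`∏ (1 + x p * x q)` over all pairs, splits as `∏ a i`, over the row set, times a factor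
`∏ (y i - y j) * (1 + y i * y j)` for the row variables and another for the column variables.
On the other side, Laplace expansion of `altDet` along its two blocks of columns gives the same
signed sum, with each such factor replaced by `∑_{λ ∈ 𝒫_n} det (y_i ^ (λ_j + n - j))`.

That these two expressions agree is a Littlewood-type identity. A partition in `𝒫_(n+1)`, `n ≥ 1`,
comes from one in `𝒫_n` either by adding an empty row or by adding an outermost hook, so that
by multilinearity the sum of determinants folds into the single determinant with columns
`y ^ m` and `y ^ (m - j) + (-1) ^ j * y ^ (m + j)` for `1 ≤ j ≤ m = n - 1`. The latter equals
`y ^ m` times a monic polynomial of degree `j` in `y⁻¹ - y`, and a Vandermonde determinant results.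
-/

namespace Sundquist

open Equiv (Perm)
open Equiv.Perm (sign)

section Transversal

theorem sum_ite_of_existsUnique {ι M : Type*} [Fintype ι] [AddCommMonoid M] {p : ι → Prop}
    [DecidablePred p] (h : ∃! i, p i) (c : M) : ∑ i, (if p i then c else 0) = c := by
  obtain ⟨i₀, hi₀, huniq⟩ := h
  rw [sum_eq_single i₀ (fun i _ hi => if_neg fun hp => hi (huniq i hp)) (by simp), if_pos hi₀]

variable {G K M : Type*} [Group G] [Group K] [AddCommMonoid M] {κ : K →* G} {S T : Finset G}

theorem sum_eq_sum_transversal [Fintype G] [Fintype K] (hT : ∀ g, ∃! k, g * κ k ∈ T)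
    (φ : G → M) : ∑ g, φ g = ∑ g ∈ T, ∑ k, φ (g * κ k) := by
  classical
  have translate (k : K) :
      ∑ g, (if g * κ k ∈ T then φ g else 0) = ∑ g ∈ T, φ (g * κ k⁻¹) := by
    rw [← Fintype.sum_ite_mem T]
    exact Fintype.sum_equiv (Equiv.mulRight (κ k)) _ _ fun g => by simp [mul_assoc]
  calc ∑ g, φ g
    _ = ∑ k, ∑ g, (if g * κ k ∈ T then φ g else 0) := by
        rw [sum_comm]
        exact sum_congr rfl fun g _ => (sum_ite_of_existsUnique (hT g) (φ g)).symm
    _ = ∑ k, ∑ g ∈ T, φ (g * κ k) := by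
        rw [sum_congr rfl fun k _ => translate k]
        exact Fintype.sum_equiv (Equiv.inv K) _ _ fun k => rfl
    _ = ∑ g ∈ T, ∑ k, φ (g * κ k) := sum_comm

theorem sum_eq_sum_inter_transversal [Finite G] [DecidableEq G] [Fintype K]
    (hS : ∀ g k, g * κ k ∈ S ↔ g ∈ S) (hT : ∀ g, ∃! k, g * κ k ∈ T) (φ : G → M) :
    ∑ g ∈ S, φ g = ∑ g ∈ T ∩ S, ∑ k, φ (g * κ k) := by
  have := Fintype.ofFinite G
  rw [← Fintype.sum_ite_mem, sum_eq_sum_transversal hT, ← sum_ite_mem]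
  refine sum_congr rfl fun g _ => ?_
  split_ifs with h <;> simp [hS, h]

theorem sum_eq_sum_of_transversals [Finite G] [Finite K] (hS : ∀ g, ∃! k, g * κ k ∈ S)
    (hT : ∀ g, ∃! k, g * κ k ∈ T) {φ : G → M} (hφ : ∀ g k, φ (g * κ k) = φ g) :
    ∑ g ∈ S, φ g = ∑ g ∈ T, φ g := by
  classical
  have := Fintype.ofFinite G
  have := Fintype.ofFinite K
  rw [← Fintype.sum_ite_mem, sum_eq_sum_transversal hT]
  refine sum_congr rfl fun g _ => ?_
  simp only [hφ, sum_ite_of_existsUnique (hS g)]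

end Transversal

section Sorting

theorem existsUnique_perm_strictMono {ι α : Type*} [Finite ι] [LinearOrder ι] [LinearOrder α]
    {f : ι → α} (hf : Function.Injective f) : ∃! τ : Perm ι, StrictMono (f ∘ τ) := by
  have := Fintype.ofFinite ι
  let e : ι ≃o Set.range f :=
    (monoEquivOfFin ι rfl).symm.trans
      (monoEquivOfFin (Set.range f) (Set.card_range_of_injective hf))
  have comp_sorted : f ∘ e.toEquiv.trans (Equiv.ofInjective f hf).symm = Subtype.val ∘ e := by
    ext i
    exact Equiv.apply_ofInjective_symm hf (e i)
  have sorted := comp_sorted ▸ (Subtype.strictMono_coe _).comp e.strictMono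
  refine ⟨_, sorted, fun τ hτ => ?_⟩
  have same_range : f ∘ τ = f ∘ e.toEquiv.trans (Equiv.ofInjective f hf).symm :=
    (hτ.range_inj sorted).1 (by simp only [EquivLike.range_comp])
  exact DFunLike.coe_injective (hf.comp_left same_range)

theorem existsUnique_pi_perm_strictMono {ι β α : Type*} [Finite ι] [LinearOrder ι]
    [LinearOrder α] {f : β → ι → α} (hf : ∀ b, Function.Injective (f b)) :
    ∃! ρ : β → Perm ι, ∀ b, StrictMono (f b ∘ ρ b) := by
  choose ρ hρ huniq using fun b => existsUnique_perm_strictMono (hf b)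
  exact ⟨ρ, hρ, fun ρ' hρ' => funext fun b => huniq b _ (hρ' b)⟩

end Sorting

section ColumnPerm

variable {ι β α : Type*}

/-- If `e` presents `α` as a rectangle with rows indexed by `ι` and columns indexed by `β`, then
`columnPerm e ρ` permutes the column `b` by `ρ b`. -/
def columnPerm (e : ι × β ≃ α) : (β → Perm ι) →* Perm α :=
  MonoidHom.mk' (fun ρ => e.permCongr (Equiv.prodCongrLeft ρ)) fun ρ ρ' => by
    ext p
    obtain ⟨⟨i, b⟩, rfl⟩ := e.surjective p
    simp [Equiv.permCongr_apply]

theorem columnPerm_apply (e : ι × β ≃ α) (ρ : β → Perm ι) (i : ι) (b : β) :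
    columnPerm e ρ (e (i, b)) = e (ρ b i, b) := by
  simp [columnPerm, Equiv.permCongr_apply]

theorem sign_columnPerm [Fintype ι] [DecidableEq ι] [Fintype β] [Fintype α] [DecidableEq α]
    (e : ι × β ≃ α) (ρ : β → Perm ι) :
    sign (columnPerm e ρ) = ∏ b, sign (ρ b) := by
  classical
  simp [columnPerm, Equiv.Perm.sign_permCongr, Equiv.Perm.sign_prodCongrLeft]

theorem prod_eq_prod_prod_columns [Fintype ι] [Fintype β] [Fintype α] {M : Type*} [CommMonoid M]
    (e : ι × β ≃ α) (f : α → M) : ∏ p, f p = ∏ b, ∏ i, f (e (i, b)) := by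
  rw [← e.prod_comp, Fintype.prod_prod_type_right]

variable [LinearOrder ι] [Fintype α] [LinearOrder α]

open scoped Classical in
/-- The permutations of `α`, seen as a rectangle through `e`, that increase down each column. -/
noncomputable def columnStrict (e : ι × β ≃ α) : Finset (Perm α) :=
  {σ | ∀ b, StrictMono fun i => σ (e (i, b))}

theorem existsUnique_mul_columnPerm_mem_columnStrict [Finite ι] (e : ι × β ≃ α) (σ : Perm α) :
    ∃! ρ, σ * columnPerm e ρ ∈ columnStrict e := by
  simp only [columnStrict, mem_filter_univ, Equiv.Perm.mul_apply, columnPerm_apply]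
  exact existsUnique_pi_perm_strictMono (f := fun b i => σ (e (i, b))) fun b i j h => by
    simpa using h

theorem det_eq_sum_prod_det [Fintype ι] [Fintype β] {R : Type*} [CommRing R]
    (M : Matrix α α R) (e : ι × β ≃ α) :
    M.det = ∑ σ ∈ columnStrict e,
      sign σ * ∏ b, (M.submatrix (fun i => σ (e (i, b))) fun i => e (i, b)).det := by
  classical
  rw [Matrix.det_apply', sum_eq_sum_transversal (existsUnique_mul_columnPerm_mem_columnStrict e)]
  refine sum_congr rfl fun σ _ => ?_
  simp only [Matrix.det_apply', Fintype.prod_sum, mul_sum, Matrix.submatrix_apply]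
  refine sum_congr rfl fun ρ _ => ?_
  rw [prod_eq_prod_prod_columns e, prod_mul_distrib, map_mul, sign_columnPerm]
  simp only [Equiv.Perm.mul_apply, columnPerm_apply]
  push_cast
  ring

end ColumnPerm

section Pfaffian

/-- The bijection `(i, b) ↦ 2 i + b`, under which the `i`-th factor of `pf` pairs the two points
of the row `i`. -/
def interlace (n : ℕ) : Fin n × Bool ≃ Fin (2 * n) :=
  ((Equiv.refl _).prodCongr finTwoEquiv.symm).trans
    (finProdFinEquiv.trans (finCongr (mul_comm n 2)))

theorem val_interlace {n : ℕ} (i : Fin n) (b : Bool) :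
    (interlace n (i, b) : ℕ) = 2 * i + b.toNat := by
  cases b <;> simp [interlace, finTwoEquiv, add_comm]

theorem interlace_false {n : ℕ} (i : Fin n) :
    interlace n (i, false) = ⟨2 * i, by have := i.2; omega⟩ :=
  Fin.ext (val_interlace i false)

theorem interlace_true {n : ℕ} (i : Fin n) :
    interlace n (i, true) = ⟨2 * i + 1, by have := i.2; omega⟩ :=
  Fin.ext (val_interlace i true)

theorem inf_comp_perm_bool {α : Type*} [SemilatticeInf α] (π : Perm Bool) (f : Bool → α) :
    f (π false) ⊓ f (π true) = f false ⊓ f true := by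
  cases h : π false <;> cases h' : π true <;>
    first | exact absurd (π.injective (h.trans h'.symm)) (by decide) | simp [inf_comm]

theorem strictMono_bool_iff {α : Type*} [Preorder α] {f : Bool → α} :
    StrictMono f ↔ f false < f true := by
  simp [StrictMono, Bool.forall_bool]

theorem sum_perm_bool {M : Type*} [AddCommMonoid M] (f : Perm Bool → M) :
    ∑ π, f π = f 1 + f (Equiv.swap false true) := by
  rw [show (univ : Finset (Perm Bool)) = {1, Equiv.swap false true} by decide,
    sum_pair (by decide)]

variable {R : Type*} [CommRing R] {n : ℕ}

/-- The contribution `sgn(σ) ∏ᵢ H(σ(2i), σ(2i+1))` of `σ` to a Pfaffian. -/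
def pairingTerm (H : Matrix (Fin (2 * n)) (Fin (2 * n)) R) (σ : Perm (Fin (2 * n))) : R :=
  sign σ * ∏ i, H (σ (interlace n (i, false))) (σ (interlace n (i, true)))

theorem pf_eq_sum_pairingTerm (H : Matrix (Fin (2 * n)) (Fin (2 * n)) R) :
    pf H = ∑ σ ∈ pfMatchings n, pairingTerm H σ := by
  simp only [pf, pairingTerm, interlace_false, interlace_true]

/-- The bijection `(b, i) ↦ 2 i + b`: `columnPerm (transposedInterlace n)` permutes each pair. -/
def transposedInterlace (n : ℕ) : Bool × Fin n ≃ Fin (2 * n) :=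
  (Equiv.prodComm _ _).trans (interlace n)

theorem columnPerm_transposedInterlace (ε : Fin n → Perm Bool) (i : Fin n) (b : Bool) :
    columnPerm (transposedInterlace n) ε (interlace n (i, b)) = interlace n (i, ε i b) :=
  columnPerm_apply (transposedInterlace n) ε b i

theorem pairingTerm_sub_transpose (H : Matrix (Fin (2 * n)) (Fin (2 * n)) R)
    (σ : Perm (Fin (2 * n))) :
    pairingTerm (H - H.transpose) σ =
      ∑ ε, pairingTerm H (σ * columnPerm (transposedInterlace n) ε) := by
  have entry (i : Fin n) :
      (H - H.transpose) (σ (interlace n (i, false))) (σ (interlace n (i, true))) =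
        ∑ π : Perm Bool, (sign π : R) *
          H (σ (interlace n (i, π false))) (σ (interlace n (i, π true))) := by
    simp [sum_perm_bool, sub_eq_add_neg]
  simp only [pairingTerm, entry, Fintype.prod_sum, mul_sum, prod_mul_distrib, map_mul,
    sign_columnPerm, Equiv.Perm.mul_apply, columnPerm_transposedInterlace]
  push_cast
  simp only [mul_assoc]

theorem pairingTerm_mul_columnPerm_const (H : Matrix (Fin (2 * n)) (Fin (2 * n)) R)
    (σ : Perm (Fin (2 * n))) (τ : Perm (Fin n)) :
    pairingTerm H (σ * columnPerm (interlace n) fun _ => τ) = pairingTerm H σ := by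
  simp only [pairingTerm, map_mul, sign_columnPerm, Equiv.Perm.mul_apply, columnPerm_apply]
  rw [Equiv.prod_comp τ fun i => H (σ (interlace n (i, false))) (σ (interlace n (i, true)))]
  simp

theorem sum_pairingTerm_mul_columnPerm_mulSingle (H : Matrix (Fin (2 * n)) (Fin (2 * n)) R)
    (σ : Perm (Fin (2 * n))) :
    ∑ ρ, pairingTerm H (σ * columnPerm (interlace n) (Pi.mulSingle true ρ)) =
      sign σ * (H.submatrix (fun i => σ (interlace n (i, false)))
        fun i => σ (interlace n (i, true))).det := by
  simp only [← Matrix.det_transpose (H.submatrix _ _), Matrix.det_apply', mul_sum, pairingTerm,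
    map_mul, sign_columnPerm, Equiv.Perm.mul_apply, columnPerm_apply, Fintype.prod_bool]
  refine sum_congr rfl fun ρ _ => ?_
  simp [mul_assoc]

open scoped Classical in
/-- The permutations whose pairs are listed in increasing order of their least elements. -/
noncomputable def minStrict (n : ℕ) : Finset (Perm (Fin (2 * n))) :=
  {σ | StrictMono fun i => σ (interlace n (i, false)) ⊓ σ (interlace n (i, true))}

open scoped Classical in
/-- The permutations whose pairs are listed in increasing order of their `b`-th elements. -/
noncomputable def sideStrict (n : ℕ) (b : Bool) : Finset (Perm (Fin (2 * n))) :=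
  {σ | StrictMono fun i => σ (interlace n (i, b))}

theorem pfMatchings_eq_inter :
    pfMatchings n = columnStrict (transposedInterlace n) ∩ minStrict n := by
  ext σ
  simp only [pfMatchings, ← interlace_false, ← interlace_true, columnStrict, minStrict,
    mem_inter, mem_filter_univ, strictMono_bool_iff]
  refine and_congr_right fun h => ?_
  simp only [inf_of_le_left (h _).le]
  rfl

theorem columnStrict_interlace :
    columnStrict (interlace n) = sideStrict n true ∩ sideStrict n false := by
  ext
  simp [columnStrict, sideStrict, and_comm]

theorem mul_columnPerm_mem_minStrict_iff (σ : Perm (Fin (2 * n))) (ε : Fin n → Perm Bool) :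
    σ * columnPerm (transposedInterlace n) ε ∈ minStrict n ↔ σ ∈ minStrict n := by
  have least (i : Fin n) := inf_comp_perm_bool (ε i) fun b => σ (interlace n (i, b))
  simp only [minStrict, mem_filter_univ, Equiv.Perm.mul_apply, columnPerm_transposedInterlace,
    least]

theorem existsUnique_mul_mem_minStrict (σ : Perm (Fin (2 * n))) :
    ∃! τ : Perm (Fin n), σ * columnPerm (interlace n) (fun _ => τ) ∈ minStrict n := by
  let least (i : Fin n) := σ (interlace n (i, false)) ⊓ σ (interlace n (i, true))
  have attained (i : Fin n) : ∃ b, σ (interlace n (i, b)) = least i :=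
    (min_choice _ _).elim (fun h => ⟨false, h.symm⟩) fun h => ⟨true, h.symm⟩
  have least_injective : Function.Injective least := fun i j hij => by
    obtain ⟨b, hb⟩ := attained i
    obtain ⟨c, hc⟩ := attained j
    simpa using congrArg Prod.fst <|
      (interlace n).injective <| σ.injective <| hb.trans (hij.trans hc.symm)
  simp only [minStrict, mem_filter_univ, Equiv.Perm.mul_apply, columnPerm_apply]
  exact existsUnique_perm_strictMono least_injective

theorem existsUnique_mul_mem_sideStrict {κ : Perm (Fin n) → Perm (Fin (2 * n))} {b : Bool}
    (hκ : ∀ τ i, κ τ (interlace n (i, b)) = interlace n (τ i, b)) (σ : Perm (Fin (2 * n))) :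
    ∃! τ, σ * κ τ ∈ sideStrict n b := by
  simp only [sideStrict, mem_filter_univ, Equiv.Perm.mul_apply, hκ]
  exact existsUnique_perm_strictMono (f := fun i => σ (interlace n (i, b))) fun i j h => by
    simpa using h

theorem mul_mem_sideStrict_iff {κ : Perm (Fin (2 * n))} {b : Bool}
    (hκ : ∀ i, κ (interlace n (i, b)) = interlace n (i, b)) (σ : Perm (Fin (2 * n))) :
    σ * κ ∈ sideStrict n b ↔ σ ∈ sideStrict n b := by
  simp only [sideStrict, mem_filter_univ, Equiv.Perm.mul_apply, hκ]

theorem pf_sub_transpose (H : Matrix (Fin (2 * n)) (Fin (2 * n)) R) :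
    pf (H - H.transpose) = ∑ σ ∈ columnStrict (interlace n),
      sign σ * (H.submatrix (fun i => σ (interlace n (i, false)))
        fun i => σ (interlace n (i, true))).det := by
  let both : Perm (Fin n) →* Perm (Fin (2 * n)) :=
    (columnPerm (interlace n)).comp (Pi.constMonoidHom _ _)
  let second : Perm (Fin n) →* Perm (Fin (2 * n)) :=
    (columnPerm (interlace n)).comp (MonoidHom.mulSingle (fun _ => Perm (Fin n)) true)
  calc pf (H - H.transpose)
    _ = ∑ σ ∈ minStrict n, pairingTerm H σ := by
        simp only [pf_eq_sum_pairingTerm, pairingTerm_sub_transpose, pfMatchings_eq_inter]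
        exact (sum_eq_sum_inter_transversal mul_columnPerm_mem_minStrict_iff
          (existsUnique_mul_columnPerm_mem_columnStrict _) _).symm
    _ = ∑ σ ∈ sideStrict n false, pairingTerm H σ :=
        sum_eq_sum_of_transversals (κ := both) existsUnique_mul_mem_minStrict
          (existsUnique_mul_mem_sideStrict fun τ i => columnPerm_apply _ _ _ _)
          (pairingTerm_mul_columnPerm_const H)
    _ = ∑ σ ∈ sideStrict n true ∩ sideStrict n false, ∑ τ, pairingTerm H (σ * second τ) :=
        sum_eq_sum_inter_transversal
          (fun σ τ => mul_mem_sideStrict_iff (fun i => by simp [second, columnPerm_apply]) σ)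
          (existsUnique_mul_mem_sideStrict fun τ i => by simp [second, columnPerm_apply]) _
    _ = _ := by
        rw [← columnStrict_interlace]
        exact sum_congr rfl fun σ _ => sum_pairingTerm_mul_columnPerm_mulSingle H σ

end Pfaffian

section Laplace

/-- The bijection `(i, b) ↦ i + n b`, under which `altDet` is built from two blocks of columns. -/
def block (n : ℕ) : Fin n × Bool ≃ Fin (2 * n) :=
  (Equiv.prodComm _ _).trans ((finTwoEquiv.symm.prodCongr (Equiv.refl _)).trans finProdFinEquiv)

theorem val_block {n : ℕ} (i : Fin n) (b : Bool) : (block n (i, b) : ℕ) = i + n * b.toNat := by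
  cases b <;> simp [block, finTwoEquiv]

/-- The permutation that moves the even positions, in order, in front of the odd ones. -/
def unriffle (n : ℕ) : Perm (Fin (2 * n)) := (interlace n).symm.trans (block n)

theorem unriffle_interlace {n : ℕ} (p : Fin n × Bool) :
    unriffle n (interlace n p) = block n p := by
  simp [unriffle]

theorem altDet_eq_sum {R : Type*} [CommRing R] {n : ℕ} (α β : Fin n → ℕ)
    (x a : Fin (2 * n) → R) :
    altDet n α β x a = sign (unriffle n) * ∑ σ ∈ columnStrict (interlace n),
      sign σ * (∏ i, a (σ (interlace n (i, false)))) *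
        (Matrix.of fun i j => x (σ (interlace n (i, false))) ^ α j).det *
        (Matrix.of fun i j => x (σ (interlace n (i, true))) ^ β j).det := by
  set M : Matrix (Fin (2 * n)) (Fin (2 * n)) R := Matrix.of fun i j =>
    if h : (j : ℕ) < n then a i * x i ^ α ⟨j, h⟩ else x i ^ β ⟨j - n, by omega⟩ with hM
  have left (p : Fin (2 * n)) (j : Fin n) : M p (block n (j, false)) = a p * x p ^ α j := by
    simp [hM, val_block]
  have right (p : Fin (2 * n)) (j : Fin n) : M p (block n (j, true)) = x p ^ β j := by
    simp [hM, val_block]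
  have unriffled : altDet n α β x a =
      sign (unriffle n) * (M.submatrix id (unriffle n)).det := by
    rw [Matrix.det_permute', ← mul_assoc, ← Int.cast_mul, ← Units.val_mul, Int.units_mul_self]
    simp [altDet, hM]
  rw [unriffled, det_eq_sum_prod_det _ (interlace n)]
  congr! 2 with σ
  simp only [Fintype.prod_bool, Matrix.submatrix_submatrix]
  rw [mul_assoc, mul_assoc, ← mul_assoc (∏ i, _), ← Matrix.det_mul_column,
    mul_comm (Matrix.det _)]
  congr 3
  · ext i j
    simp [unriffle_interlace, left]
  · ext i j
    simp [unriffle_interlace, right]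

end Laplace

section PairProducts

variable {M : Type*} [CommMonoid M]

theorem prod_Ioi_eq_prod_ite {α : Type*} [Fintype α] [LinearOrder α] [LocallyFiniteOrderTop α]
    (p : α) (f : α → M) : ∏ q ∈ Ioi p, f q = ∏ q, if p < q then f q else 1 := by
  rw [← prod_filter, filter_lt_eq_Ioi]

theorem prod_ite_eq_prod_ite_of_symm {α : Type*} [Fintype α] {r s : α → α → Prop}
    [DecidableRel r] [DecidableRel s] (hr : ∀ p q, r p q ↔ p ≠ q ∧ ¬r q p)
    (hs : ∀ p q, s p q ↔ p ≠ q ∧ ¬s q p) {g : α → α → M} (hg : ∀ p q, g p q = g q p) :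
    ∏ p, ∏ q, (if r p q then g p q else 1) = ∏ p, ∏ q, if s p q then g p q else 1 := by
  have split (r s : α → α → Prop) [DecidableRel r] [DecidableRel s]
      (hs : ∀ p q, s p q ↔ p ≠ q ∧ ¬s q p) (hr : ∀ p q, r p q ↔ p ≠ q ∧ ¬r q p) :
      ∏ p, ∏ q, (if r p q then g p q else 1) =
        (∏ p, ∏ q, if r p q ∧ s p q then g p q else 1) *
          ∏ p, ∏ q, if r p q ∧ s q p then g p q else 1 := by
    simp only [← prod_mul_distrib]
    refine prod_congr rfl fun p _ => prod_congr rfl fun q _ => ?_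
    have := hr p q
    have := hs p q
    grind
  rw [split r s hs hr, split s r hr hs]
  congr 1
  · simp only [and_comm]
  · rw [prod_comm]
    exact prod_congr rfl fun q _ => prod_congr rfl fun p _ => by
      rw [hg]
      exact if_congr and_comm rfl rfl

theorem prod_Ioi_eq_of_equiv_prod_bool {α ι : Type*} [Fintype α] [LinearOrder α]
    [LocallyFiniteOrderTop α] [Fintype ι] [LinearOrder ι] [LocallyFiniteOrderTop ι]
    (e : ι × Bool ≃ α) {g : α → α → M} (hg : ∀ p q, g p q = g q p) :
    ∏ p, ∏ q ∈ Ioi p, g p q =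
      (∏ i, ∏ j ∈ Ioi i, g (e (i, false)) (e (j, false))) *
      (∏ i, ∏ j ∈ Ioi i, g (e (i, true)) (e (j, true))) *
      ∏ i, ∏ j, g (e (i, false)) (e (j, true)) := by
  simp only [prod_Ioi_eq_prod_ite]
  calc ∏ p, ∏ q, (if p < q then g p q else 1)
    _ = ∏ p, ∏ q, if e p < e q then g (e p) (e q) else 1 := by
        simp only [← e.prod_comp]
    _ = ∏ p : ι × Bool, ∏ q : ι × Bool,
          if p.2 < q.2 ∨ p.2 = q.2 ∧ p.1 < q.1 then g (e p) (e q) else 1 := by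
        refine prod_ite_eq_prod_ite_of_symm (fun p q => ?_) (fun p q => ?_) fun p q => hg _ _
        · rw [not_lt, lt_iff_le_and_ne, and_comm, e.injective.ne_iff]
        · grind
    _ = _ := by
        simp only [Fintype.prod_prod_type_right, Fintype.prod_bool, prod_mul_distrib,
          lt_self_iff_false, true_and, false_or, Bool.false_lt_true, Bool.false_eq_true,
          Bool.true_eq_false, Bool.false_lt_true.not_gt, false_and, or_false, reduceIte,
          prod_const_one, one_mul]
        ac_rfl

theorem sign_unriffle (n : ℕ) : sign (unriffle n) = ∏ i : Fin n, ∏ _j ∈ Ioi i, (-1) := by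
  have order_change (p q : Fin (2 * n)) (h : q ∈ Ioi p) :
      (if unriffle n p < unriffle n q then (1 : ℤˣ) else -1) =
        if p < q ↔ unriffle n p < unriffle n q then 1 else -1 := by
    simp [mem_Ioi.1 h]
  have same_side (b : Bool) (i j : Fin n) :
      interlace n (i, b) < interlace n (j, b) ↔ block n (i, b) < block n (j, b) := by
    simp only [Fin.lt_def, val_interlace, val_block]
    omega
  have crossing (i j : Fin n) :
      (interlace n (i, false) < interlace n (j, true) ↔
        block n (i, false) < block n (j, true)) ↔ ¬j < i := by
    simp only [Fin.lt_def, val_interlace, val_block, Bool.toNat]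
    grind
  rw [Equiv.Perm.sign_eq_prod_prod_Ioi,
    prod_congr rfl fun p _ => prod_congr rfl (order_change p),
    prod_Ioi_eq_of_equiv_prod_bool (interlace n)]
  · simp only [unriffle_interlace, same_side, crossing]
    simp only [if_true, prod_const_one, one_mul, ite_not, prod_Ioi_eq_prod_ite]
    exact prod_comm
  · intro p q
    have := (unriffle n).injective.ne_iff (x := p) (y := q)
    grind

end PairProducts

section Cauchy

variable {R : Type*} [CommRing R]

theorem det_eq_mul_det_schur {n : ℕ} (M : Matrix (Fin (n + 1)) (Fin (n + 1)) R) {u : R}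
    (hu : u * M 0 0 = 1) :
    M.det = M 0 0 *
      (Matrix.of fun i j : Fin n => M i.succ j.succ - M i.succ 0 * u * M 0 j.succ).det := by
  let B : Matrix (Fin (n + 1)) (Fin (n + 1)) R :=
    Fin.cons (M 0) fun i j => M i.succ j - M i.succ 0 * u * M 0 j
  have det_eq : M.det = B.det := by
    refine Matrix.det_eq_of_forall_row_eq_smul_add_const
      (Fin.cons 0 fun i => M i.succ 0 * u) 0 rfl fun i j => ?_
    cases i using Fin.cases <;> simp [B]
  have column_zero (i : Fin n) : B i.succ 0 = 0 := by
    simp [B, mul_assoc, hu]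
  rw [det_eq, Matrix.det_succ_column_zero, Fin.sum_univ_succ]
  simp only [column_zero]
  simp only [mul_zero, zero_mul, sum_const_zero, add_zero, Fin.val_zero, pow_zero, one_mul]
  rfl

theorem cauchy_schur_complement {p q r s A B C : R} (hA : A * (1 + q * s) = 1)
    (hB : B * (1 + q * r) = 1) (hC : C * (1 + p * s) = 1) :
    A - B * (1 + p * r) * C = (p - q) * B * ((s - r) * C * A) := by
  linear_combination B * C * (1 + p * r) * hA - A * C * (1 + p * s) * hB - A * hC

theorem det_cauchy_mul_prod {n : ℕ} (y z : Fin n → R) (c : Matrix (Fin n) (Fin n) R)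
    (hc : ∀ i j, c i j * (1 + y i * z j) = 1) :
    c.det * ∏ i, ∏ j, (1 + y i * z j) = ∏ i, ∏ j ∈ Ioi i, ((y i - y j) * (z j - z i)) := by
  induction n with
  | zero => simp
  | succ n ih =>
    let c' := c.submatrix Fin.succ Fin.succ
    have minor := ih (fun i => y i.succ) (fun i => z i.succ) c' fun i j => hc _ _
    have schur : (Matrix.of fun i j : Fin n =>
        c i.succ j.succ - c i.succ 0 * (1 + y 0 * z 0) * c 0 j.succ).det =
        (∏ i : Fin n, (y 0 - y i.succ) * c i.succ 0) *
          ((∏ j : Fin n, (z j.succ - z 0) * c 0 j.succ) * c'.det) := by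
      rw [← Matrix.det_mul_row, ← Matrix.det_mul_column]
      congr 1
      ext i j
      exact cauchy_schur_complement (hc _ _) (hc _ _) (hc _ _)
    have column : (∏ i : Fin n, c i.succ 0) * ∏ i : Fin n, (1 + y i.succ * z 0) = 1 := by
      simp [← prod_mul_distrib, hc]
    have row : (∏ j : Fin n, c 0 j.succ) * ∏ j : Fin n, (1 + y 0 * z j.succ) = 1 := by
      simp [← prod_mul_distrib, hc]
    rw [det_eq_mul_det_schur c ((mul_comm _ _).trans (hc 0 0)), schur]
    simp only [Fin.prod_univ_succ, Fin.prod_Ioi_zero, Fin.prod_Ioi_succ, prod_mul_distrib]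
      at minor ⊢
    have corner := hc 0 0
    generalize ∏ i : Fin n, c i.succ 0 = B, ∏ i : Fin n, (1 + y i.succ * z 0) = P at column ⊢
    generalize ∏ j : Fin n, c 0 j.succ = C, ∏ j : Fin n, (1 + y 0 * z j.succ) = Q at row ⊢
    generalize ∏ i : Fin n, (y 0 - y i.succ) = Y, ∏ i : Fin n, (z i.succ - z 0) = Z
    generalize ∏ i : Fin n, ∏ j : Fin n, (1 + y i.succ * z j.succ) = D at minor ⊢
    linear_combination Y * Z * c'.det * D * (B * P * C * Q * corner + C * Q * column + row) +
      Y * Z * minor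

end Cauchy

section FrobeniusSet

variable {n : ℕ}

/-- The partition `l` with an empty last row: the part of `𝒫_(n+1)` with fewer than `n + 1`
rows. -/
def appendZero (l : Fin n → Fin n) : Fin (n + 1) → Fin (n + 1) :=
  Fin.snoc (α := fun _ => Fin (n + 1)) (fun j => (l j).castSucc) 0

/-- The partition `l` with a new outermost diagonal hook, with arm `n - 1` and leg `n`. -/
def prependHook (l : Fin n → Fin n) : Fin (n + 1) → Fin (n + 1) :=
  Fin.cons (α := fun _ => Fin (n + 1)) (Fin.last n) fun j => (l j).succ

@[simp]
theorem appendZero_castSucc (l : Fin n → Fin n) (j : Fin n) :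
    appendZero l j.castSucc = (l j).castSucc := by
  simp [appendZero]

@[simp]
theorem appendZero_last (l : Fin n → Fin n) : appendZero l (Fin.last n) = 0 := by
  simp [appendZero]

@[simp]
theorem prependHook_zero (l : Fin n → Fin n) : prependHook l 0 = Fin.last n := rfl

@[simp]
theorem prependHook_succ (l : Fin n → Fin n) (j : Fin n) :
    prependHook l j.succ = (l j).succ := rfl

theorem appendZero_injective : Function.Injective (appendZero (n := n)) := fun l m h =>
  funext fun j => by simpa using congrFun h j.castSucc

theorem prependHook_injective : Function.Injective (prependHook (n := n)) := fun l m h =>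
  funext fun j => by simpa using congrFun h j.succ

theorem mem_frobeniusSet {l : Fin n → Fin n} :
    l ∈ frobeniusSet n ↔ Antitone l ∧
      ∀ i : Fin n, (i : ℕ) + 1 ≤ l i → #{j : Fin n | (i : ℕ) + 1 ≤ l j} = l i + 1 := by
  simp [frobeniusSet, Antitone]

theorem antitone_appendZero {l : Fin n → Fin n} : Antitone (appendZero l) ↔ Antitone l := by
  refine ⟨fun h i j hij => ?_, fun h i j hij => ?_⟩
  · simpa using h (Fin.castSucc_le_castSucc_iff.2 hij)
  · cases j using Fin.lastCases with
    | last => simp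
    | cast j =>
      cases i using Fin.lastCases with
      | last => exact absurd hij (by simp)
      | cast i => simpa using h (Fin.castSucc_le_castSucc_iff.1 hij)

theorem antitone_prependHook {l : Fin n → Fin n} : Antitone (prependHook l) ↔ Antitone l := by
  refine ⟨fun h i j hij => ?_, fun h i j hij => ?_⟩
  · simpa using h (Fin.succ_le_succ_iff.2 hij)
  · cases i using Fin.cases with
    | zero => simp [Fin.le_last]
    | succ i =>
      cases j using Fin.cases with
      | zero => exact absurd hij (by simp)
      | succ j => simpa using h (Fin.succ_le_succ_iff.1 hij)

theorem card_filter_le_appendZero (l : Fin n → Fin n) (k : ℕ) :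
    #{j | k + 1 ≤ (appendZero l j : ℕ)} = #{j | k + 1 ≤ (l j : ℕ)} := by
  simp only [card_filter, Fin.sum_univ_castSucc]
  simp

theorem card_filter_le_prependHook (l : Fin n → Fin n) {k : ℕ} (hk : k < n) :
    #{j | k + 1 ≤ (prependHook l j : ℕ)} = #{j | k ≤ (l j : ℕ)} + 1 := by
  simp only [card_filter, Fin.sum_univ_succ]
  simp [Nat.succ_le_of_lt hk, add_comm]

theorem appendZero_mem_frobeniusSet {l : Fin n → Fin n} :
    appendZero l ∈ frobeniusSet (n + 1) ↔ l ∈ frobeniusSet n := by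
  simp only [mem_frobeniusSet, antitone_appendZero, card_filter_le_appendZero,
    Fin.forall_fin_succ', appendZero_castSucc, appendZero_last, Fin.val_castSucc, Fin.val_zero]
  simp

theorem prependHook_mem_frobeniusSet {l : Fin n → Fin n} :
    prependHook l ∈ frobeniusSet (n + 1) ↔ l ∈ frobeniusSet n := by
  rw [mem_frobeniusSet, mem_frobeniusSet, antitone_prependHook, Fin.forall_fin_succ]
  refine and_congr_right fun _ => ⟨fun h i hi => ?_, fun h => ⟨fun h0 => ?_, fun i hi => ?_⟩⟩
  · have := h.2 i (by simpa using hi)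
    exact Nat.succ_injective <|
      (card_filter_le_prependHook l (hi.trans_lt (l i).2)).symm.trans this
  · rw [card_filter_le_prependHook l h0]
    simp
  · replace hi : (i : ℕ) + 1 ≤ l i := by simpa using hi
    exact (card_filter_le_prependHook l (hi.trans_lt (l i).2)).trans (congrArg (· + 1) (h i hi))

theorem apply_last_ne_zero_iff {l : Fin (n + 2) → Fin (n + 2)} (hl : l ∈ frobeniusSet (n + 2)) :
    l (Fin.last _) ≠ 0 ↔ l 0 = Fin.last _ := by
  obtain ⟨anti, hook⟩ := mem_frobeniusSet.1 hl
  have pos_iff (j : Fin (n + 2)) : (0 : Fin (n + 2)) + 1 ≤ (l j : ℕ) ↔ l j ≠ 0 := by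
    rw [Fin.val_zero, zero_add, Nat.one_le_iff_ne_zero, Fin.val_ne_zero_iff]
  have rows := hook 0
  simp only [pos_iff] at rows
  constructor
  · intro h
    have all_ne (j : Fin (n + 2)) : l j ≠ 0 :=
      ((Fin.pos_iff_ne_zero.2 h).trans_le (anti (Fin.le_last j))).ne'
    rw [filter_true_of_mem fun j _ => all_ne j, card_univ, Fintype.card_fin] at rows
    exact Fin.ext (Nat.succ_injective (rows (all_ne 0))).symm
  · intro h
    refine card_filter_eq_iff (p := (l · ≠ 0)).1 ?_ (Fin.last _) (mem_univ _)
    rw [rows (h ▸ Fin.last_pos.ne'), h, card_univ, Fintype.card_fin, Fin.val_last]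

theorem filter_last_eq_zero_frobeniusSet (n : ℕ) :
    {l ∈ frobeniusSet (n + 2) | l (Fin.last _) = 0} =
      (frobeniusSet (n + 1)).image appendZero := by
  refine Subset.antisymm (fun l hl => ?_) (image_subset_iff.2 fun m hm => ?_)
  · obtain ⟨hl, last_eq⟩ := mem_filter.1 hl
    have ne_last (j : Fin (n + 1)) : l j.castSucc ≠ Fin.last _ := fun h =>
      (apply_last_ne_zero_iff hl).2
        (Fin.last_le_iff.1 (h ▸ (mem_frobeniusSet.1 hl).1 (Fin.zero_le _))) last_eq
    have l_eq : appendZero (fun j => (l j.castSucc).castPred (ne_last j)) = l := by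
      ext j
      cases j using Fin.lastCases <;> simp [last_eq]
    exact mem_image.2 ⟨_, appendZero_mem_frobeniusSet.1 (by rwa [l_eq]), l_eq⟩
  · exact mem_filter.2 ⟨appendZero_mem_frobeniusSet.2 hm, appendZero_last m⟩

theorem filter_last_ne_zero_frobeniusSet (n : ℕ) :
    {l ∈ frobeniusSet (n + 2) | l (Fin.last _) ≠ 0} =
      (frobeniusSet (n + 1)).image prependHook := by
  refine Subset.antisymm (fun l hl => ?_) (image_subset_iff.2 fun m hm => ?_)
  · obtain ⟨hl, last_ne⟩ := mem_filter.1 hl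
    have ne_zero (j : Fin (n + 1)) : l j.succ ≠ 0 :=
      ((Fin.pos_iff_ne_zero.2 last_ne).trans_le
        ((mem_frobeniusSet.1 hl).1 (Fin.le_last _))).ne'
    have l_eq : prependHook (fun j => (l j.succ).pred (ne_zero j)) = l := by
      ext j
      cases j using Fin.cases <;> simp [(apply_last_ne_zero_iff hl).1 last_ne]
    exact mem_image.2 ⟨_, prependHook_mem_frobeniusSet.1 (by rwa [l_eq]), l_eq⟩
  · exact mem_filter.2 ⟨prependHook_mem_frobeniusSet.2 hm, Fin.succ_ne_zero _⟩

theorem sum_frobeniusSet_add_two {M : Type*} [AddCommMonoid M] (n : ℕ)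
    (φ : (Fin (n + 2) → Fin (n + 2)) → M) :
    ∑ l ∈ frobeniusSet (n + 2), φ l =
      ∑ l ∈ frobeniusSet (n + 1), φ (appendZero l) +
        ∑ l ∈ frobeniusSet (n + 1), φ (prependHook l) := by
  rw [← sum_filter_add_sum_filter_not _ fun l => l (Fin.last _) = 0,
    filter_last_eq_zero_frobeniusSet, filter_last_ne_zero_frobeniusSet,
    sum_image appendZero_injective.injOn, sum_image prependHook_injective.injOn]

end FrobeniusSet

section FoldedColumns

variable {M : Type*} [AddCommGroup M]

/-- The `j`-th column obtained by folding the sequence `v` about position `m`: the entries at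
distance `j` from `m` are combined with sign `(-1) ^ j`. Position `m` itself is counted once. -/
def foldedColumn (v : ℕ → M) (m j : ℕ) : M :=
  v (m - j) + if j = 0 then 0 else (-1 : ℤ) ^ j • v (m + j)

theorem foldedColumn_succ_of_le (v : ℕ → M) {m j : ℕ} (h : j ≤ m) :
    foldedColumn v (m + 1) j = foldedColumn (fun e => v (e + 1)) m j := by
  simp only [foldedColumn, Nat.sub_add_comm h, Nat.add_right_comm m 1 j]

theorem foldedColumn_self (v : ℕ → M) {m : ℕ} (hm : m ≠ 0) :
    foldedColumn v m m = v 0 + (-1 : ℤ) ^ m • v (2 * m) := by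
  simp [foldedColumn, hm, two_mul]

variable {R N : Type*} [CommRing R] [Module R M] [AddCommGroup N] [Module R N]

theorem map_snoc_eq_smul_curryLeft {n : ℕ} (f : M [⋀^Fin (n + 1)]→ₗ[R] N) (u : Fin n → M)
    (w : M) :
    f (Fin.snoc (α := fun _ => M) u w) = (-1 : ℤ) ^ n • f.curryLeft w u := by
  rw [← Fin.insertNth_last', f.map_insertNth, Fin.val_last]
  rfl

theorem sum_frobeniusSet_alternating (m : ℕ) (f : M [⋀^Fin (m + 1)]→ₗ[R] N) (v : ℕ → M) :
    ∑ l ∈ frobeniusSet (m + 1), f (fun j => v (l j + (m - j))) =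
      f fun j => foldedColumn v m j := by
  induction m generalizing v with
  | zero =>
    have frobeniusSet_one : frobeniusSet 1 = {0} := by decide
    simp [frobeniusSet_one, foldedColumn]
  | succ m ih =>
    have append_zero (l : Fin (m + 1) → Fin (m + 1)) :
        (fun j => v (appendZero l j + (m + 1 - j))) =
          Fin.snoc (α := fun _ => M) (fun j => v (l j + (m - j) + 1)) (v 0) := by
      funext j
      cases j using Fin.lastCases with
      | last => simp
      | cast j => simp [Nat.sub_add_comm (Fin.is_le j), add_assoc]
    have prepend_hook (l : Fin (m + 1) → Fin (m + 1)) :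
        (fun j => v (prependHook l j + (m + 1 - j))) =
          Matrix.vecCons (v (2 * (m + 1))) fun j => v (l j + (m - j) + 1) := by
      funext j
      cases j using Fin.cases with
      | zero => simp [two_mul]
      | succ j => simp [add_right_comm]
    have folded : (fun j : Fin (m + 2) => foldedColumn v (m + 1) j) =
        Fin.snoc (α := fun _ => M)
          (fun j : Fin (m + 1) => foldedColumn (fun e => v (e + 1)) m j)
          (v 0 + (-1 : ℤ) ^ (m + 1) • v (2 * (m + 1))) := by
      funext j
      cases j using Fin.lastCases with
      | last => simp [foldedColumn_self]
      | cast j => simp [foldedColumn_succ_of_le v (Fin.is_le j)]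
    simp only [sum_frobeniusSet_add_two, append_zero, prepend_hook, folded,
      map_snoc_eq_smul_curryLeft, ← AlternatingMap.curryLeft_apply_apply, ← smul_sum,
      ih _ fun e => v (e + 1)]
    rw [map_add, map_zsmul, AlternatingMap.add_apply, AlternatingMap.smul_apply, smul_add,
      smul_smul, ← mul_pow]
    simp

end FoldedColumns

section FoldedDeterminant

open Polynomial

variable {R : Type*} [CommRing R]

theorem homogenize_add_eq_X_pow_mul {p : R[X]} {n : ℕ} (hp : p.natDegree ≤ n) (d : ℕ) :
    p.homogenize (n + d) = MvPolynomial.X 1 ^ d * p.homogenize n := by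
  rw [← mul_one p, homogenize_mul p 1 hp (by simp), homogenize_one, mul_one, mul_comm]

theorem isMonicOfDegree_dickson [Nontrivial R] (k : ℕ) (a : R) (n : ℕ) :
    IsMonicOfDegree (dickson k a (n + 1)) (n + 1) := by
  induction n using Nat.twoStepInduction with
  | zero => simpa using isMonicOfDegree_X R
  | one =>
    have constant_degree : (C a * (3 - (k : R[X]))).natDegree ≤ 0 := by compute_degree
    rw [dickson_two]
    exact (isMonicOfDegree_X_pow R 2).sub (constant_degree.trans_lt two_pos)
  | more n ih₀ ih₁ =>
    rw [dickson_add_two, add_comm (n + 2) 1]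
    refine ((isMonicOfDegree_X R).mul ih₁).sub ?_
    have := (natDegree_C_mul_le a (dickson k a (n + 1))).trans ih₀.natDegree_eq.le
    omega

theorem natDegree_dickson_le (k : ℕ) (a : R) (n : ℕ) : (dickson k a n).natDegree ≤ n := by
  nontriviality R
  cases n with
  | zero =>
    rw [dickson_zero]
    compute_degree
  | succ n => exact (isMonicOfDegree_dickson k a n).natDegree_eq.le

-- `D_n(t + a / t) = t ^ n + (a / t) ^ n`, with the denominator `w` of `t = p / w` cleared.
theorem eval_homogenize_dickson {p q w a : R} (h : p * q = a * w ^ 2) (n : ℕ) :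
    MvPolynomial.eval ![p + q, w] ((dickson 1 a n).homogenize n) = p ^ n + q ^ n := by
  induction n using Nat.twoStepInduction with
  | zero =>
    have two_eq : dickson 1 a 0 = C 2 := by
      rw [dickson_zero, Nat.cast_one, map_ofNat]
      norm_num
    rw [two_eq, homogenize_C]
    norm_num
  | one => simp
  | more n ih₀ ih₁ =>
    have first_term : (X * dickson 1 a (n + 1)).homogenize (n + 2) =
        MvPolynomial.X 0 * (dickson 1 a (n + 1)).homogenize (n + 1) := by
      rw [show n + 2 = 1 + (n + 1) by ring, homogenize_mul X _ natDegree_X_le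
        (natDegree_dickson_le 1 a (n + 1))]
      simp
    rw [dickson_add_two, homogenize_sub, homogenize_C_mul, first_term,
      homogenize_add_eq_X_pow_mul (natDegree_dickson_le 1 a n) 2]
    simp only [map_sub, map_mul, map_pow, MvPolynomial.eval_C, MvPolynomial.eval_X, ih₀, ih₁,
      Matrix.cons_val_zero, Matrix.cons_val_one]
    linear_combination (p ^ n + q ^ n) * h

theorem det_eval_homogenize {m : ℕ} (p : Fin (m + 1) → R[X])
    (hp : ∀ j, IsMonicOfDegree (p j) j) (v w : Fin (m + 1) → R) :
    (Matrix.of fun i j => MvPolynomial.eval ![v i, w i] ((p j).homogenize m)).det =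
      ∏ i, ∏ j ∈ Ioi i, (v j * w i - v i * w j) := by
  have factor : (Matrix.of fun i j => MvPolynomial.eval ![v i, w i] ((p j).homogenize m)) =
      Matrix.projVandermonde v w * Matrix.of fun (k j : Fin (m + 1)) => (p j).coeff k := by
    ext i j
    simp only [Matrix.of_apply, homogenize, map_sum, Matrix.mul_apply,
      Finset.Nat.sum_antidiagonal_eq_sum_range_succ_mk, Finset.sum_range,
      Matrix.projVandermonde_apply, MvPolynomial.eval_monomial]
    refine sum_congr rfl fun k _ => ?_
    simp [Finsupp.prod_fintype, mul_comm]
  rw [factor, Matrix.det_mul, Matrix.det_matrixOfPolynomials p (fun j => (hp j).natDegree_eq)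
    (fun j => (hp j).monic), mul_one, Matrix.det_projVandermonde]

theorem eval_homogenize_dickson_eq_foldedColumn (y : R) {m j : ℕ} (hj : j ≠ 0) (hjm : j ≤ m) :
    MvPolynomial.eval ![1 - y ^ 2, y] ((dickson 1 (-1) j).homogenize m) =
      foldedColumn (fun e => y ^ e) m j := by
  obtain ⟨d, rfl⟩ := Nat.exists_eq_add_of_le hjm
  rw [homogenize_add_eq_X_pow_mul (natDegree_dickson_le 1 _ j), map_mul, sub_eq_add_neg,
    eval_homogenize_dickson (by ring)]
  simp only [foldedColumn, hj, if_false, map_pow, MvPolynomial.eval_X, Matrix.cons_val_one,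
    Matrix.cons_val_fin_one, zsmul_eq_mul, Nat.add_sub_cancel_left]
  push_cast
  ring

theorem det_foldedColumn (m : ℕ) (y : Fin (m + 1) → R) :
    (Matrix.of fun i j : Fin (m + 1) => foldedColumn (fun e => y i ^ e) m j).det =
      ∏ i, ∏ j ∈ Ioi i, ((y i - y j) * (1 + y i * y j)) := by
  nontriviality R
  let p (j : Fin (m + 1)) : R[X] := if j = 0 then 1 else dickson 1 (-1) j
  have p_monic (j : Fin (m + 1)) : IsMonicOfDegree (p j) j := by
    cases j using Fin.cases with
    | zero => simp [p]
    | succ j => simpa [p] using isMonicOfDegree_dickson 1 (-1) (j : ℕ)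
  have column (i j : Fin (m + 1)) : foldedColumn (fun e => y i ^ e) m j =
      MvPolynomial.eval ![1 - y i ^ 2, y i] ((p j).homogenize m) := by
    cases j using Fin.cases with
    | zero => simp [p, foldedColumn]
    | succ j =>
      rw [← eval_homogenize_dickson_eq_foldedColumn _ (by simp) (Fin.is_le _)]
      simp [p]
  simp only [column]
  rw [det_eval_homogenize p p_monic]
  refine prod_congr rfl fun i _ => prod_congr rfl fun j _ => by ring

/-- The alternating sum `∑_{λ ∈ 𝒫_n} det (y_i ^ (λ_j + n - j))` (with `j` counted from 1), that
is, the Vandermonde determinant times the sum of the Schur functions `s_λ` over `𝒫_n`. -/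
def frobeniusAlternant {n : ℕ} (y : Fin n → R) : R :=
  ∑ l ∈ frobeniusSet n, (Matrix.of fun i j => y i ^ (l j + (n - 1 - j) : ℕ)).det

theorem frobeniusAlternant_eq_prod {n : ℕ} (y : Fin n → R) :
    frobeniusAlternant y = ∏ i, ∏ j ∈ Ioi i, ((y i - y j) * (1 + y i * y j)) := by
  cases n with
  | zero =>
    have frobeniusSet_zero : frobeniusSet 0 = univ := by decide
    simp [frobeniusAlternant, frobeniusSet_zero]
  | succ m =>
    have folded (i j : Fin (m + 1)) :
        foldedColumn (fun e i => y i ^ e) m j i = foldedColumn (fun e => y i ^ e) m j := by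
      unfold foldedColumn
      split_ifs <;> simp
    calc
      _ = ∑ l ∈ frobeniusSet (m + 1),
          Matrix.detRowAlternating fun j i => y i ^ (l j + (m - j) : ℕ) :=
        sum_congr rfl fun l _ => (Matrix.det_transpose _).symm
      _ = Matrix.detRowAlternating fun j i => foldedColumn (fun e => y i ^ e) m j := by
        rw [sum_frobeniusSet_alternating m Matrix.detRowAlternating fun e i => y i ^ e]
        simp only [← folded]
      _ = _ := (Matrix.det_transpose _).trans (det_foldedColumn m y)

end FoldedDeterminant

section Combine

variable {R : Type*} [CommRing R]

theorem prod_Ioi_sub_mul_sub {n : ℕ} (y z : Fin n → R) :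
    ∏ i, ∏ j ∈ Ioi i, ((y i - y j) * (z j - z i)) =
      (sign (unriffle n) : ℤ) *
        ((∏ i, ∏ j ∈ Ioi i, (y i - y j)) * ∏ i, ∏ j ∈ Ioi i, (z i - z j)) := by
  rw [sign_unriffle]
  push_cast
  simp only [← prod_mul_distrib]
  exact prod_congr rfl fun i _ => prod_congr rfl fun j _ => by ring

theorem det_inverse_one_add_mul_prod {n : ℕ} (x : Fin (2 * n) → R)
    (hx : Pairwise fun i j => IsUnit (1 + x i * x j)) (σ : Perm (Fin (2 * n))) :
    (Matrix.of fun i j => Ring.inverse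
        (1 + x (σ (interlace n (i, false))) * x (σ (interlace n (j, true))))).det *
        ∏ p, ∏ q ∈ Ioi p, (1 + x p * x q) =
      (sign (unriffle n) : ℤ) *
        ((frobeniusAlternant fun i => x (σ (interlace n (i, false)))) *
          frobeniusAlternant fun i => x (σ (interlace n (i, true)))) := by
  have cauchy := det_cauchy_mul_prod (fun i => x (σ (interlace n (i, false))))
    (fun j => x (σ (interlace n (j, true)))) (Matrix.of fun i j => Ring.inverse
      (1 + x (σ (interlace n (i, false))) * x (σ (interlace n (j, true))))) fun i j =>
    Ring.inverse_mul_cancel _ (hx (by simp))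
  rw [prod_Ioi_sub_mul_sub] at cauchy
  rw [frobeniusAlternant_eq_prod, frobeniusAlternant_eq_prod,
    prod_Ioi_eq_of_equiv_prod_bool ((interlace n).trans σ) fun p q => by ring]
  simp only [Equiv.trans_apply, prod_mul_distrib]
  linear_combination
    (∏ i, ∏ j ∈ Ioi i, (1 + x (σ (interlace n (i, false))) * x (σ (interlace n (j, false))))) *
    (∏ i, ∏ j ∈ Ioi i, (1 + x (σ (interlace n (i, true))) * x (σ (interlace n (j, true))))) *
    cauchy

theorem Un_eq_sum_columnStrict (n : ℕ) (x a : Fin (2 * n) → R) :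
    Un n x a = (sign (unriffle n) : ℤ) * ∑ σ ∈ columnStrict (interlace n), (sign σ : ℤ) *
      (∏ i, a (σ (interlace n (i, false)))) *
        ((frobeniusAlternant fun i => x (σ (interlace n (i, false)))) *
          frobeniusAlternant fun i => x (σ (interlace n (i, true)))) := by
  simp only [Un, altDet_eq_sum, frobeniusAlternant, sum_mul_sum, ← mul_sum]
  rw [sum_congr rfl fun l _ => sum_comm, sum_comm]
  simp only [mul_assoc, mul_sum]

end Combine

end Sundquist

open Sundquist in
theorem sundquist_second_general {R : Type*} [CommRing R] (n : ℕ) (x a : Fin (2 * n) → R)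
    (hx : Pairwise fun i j => IsUnit (1 + x i * x j)) :
    pf (Matrix.of fun i j => (a i - a j) * Ring.inverse (1 + x i * x j)) *
      ∏ i : Fin (2 * n), ∏ j ∈ Ioi i, (1 + x i * x j) = Un n x a := by
  let H : Matrix (Fin (2 * n)) (Fin (2 * n)) R :=
    Matrix.of fun p q => a p * Ring.inverse (1 + x p * x q)
  have skew : (Matrix.of fun i j => (a i - a j) * Ring.inverse (1 + x i * x j)) =
      H - H.transpose := by
    ext i j
    simp [H, mul_comm (x j), sub_mul]
  rw [skew, pf_sub_transpose, Un_eq_sum_columnStrict, sum_mul, mul_sum]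
  refine sum_congr rfl fun σ _ => ?_
  have pull_out : (H.submatrix (fun i => σ (interlace n (i, false)))
      fun i => σ (interlace n (i, true))).det = _ :=
    Matrix.det_mul_column (fun i => a (σ (interlace n (i, false)))) (Matrix.of fun i j =>
      Ring.inverse (1 + x (σ (interlace n (i, false))) * x (σ (interlace n (j, true)))))
  rw [pull_out]
  linear_combination (Equiv.Perm.sign σ : ℤ) * (∏ i, a (σ (interlace n (i, false)))) *
    det_inverse_one_add_mul_prod x hx σ

/-- Sundquist:
`Pf[ (a_i − a_j)/(1 + x_i x_j) ] = U^n(X;A) / Π_{i<j}(1 + x_i x_j)`. -/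
theorem sundquist_second (F : Type*) [Field F] (n : ℕ) (hn : 1 ≤ n)
    (x a : Fin (2 * n) → F)
    (hx : ∀ i j : Fin (2 * n), 1 + x i * x j ≠ 0) :
    pf (Matrix.of fun i j : Fin (2 * n) => (a i - a j) / (1 + x i * x j)) =
      Un n x a / ∏ i : Fin (2 * n), ∏ j ∈ Ioi i, (1 + x i * x j) := by
  rw [eq_div_iff (prod_ne_zero_iff.2 fun i _ => prod_ne_zero_iff.2 fun j _ => hx i j),
    ← sundquist_second_general n x a fun i j _ => (hx i j).isUnit]
  simp only [div_eq_mul_inv, Ring.inverse_eq_inv']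
end

section
/- Let n ≥ 1 and let x_1,...,x_{2n}, a_1,...,a_{2n} be variables. Then U^n(X;A) = V^n(X, 1−X^2; A, 1), where V^n(X, 1−X^2; A, 1) is the determinant of the 2n×2n matrix with (i,j) entry a_i x_i^{n−j}(1 − x_i^2)^{j−1} for 1≤j≤n and x_i^{2n−j}(1 − x_i^2)^{j−n−1} for n+1≤j≤2n, and U^n(X;A) = Σ_{λ,μ∈P_n} a_{λ,μ}(X;A). -/
/-!
Write `y = 1 - x²` and consider the monomials `xⁿ, xⁿ⁻¹y, …, yⁿ` inside an alternating form. The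
first `n` of them are `x` times the monomials of degree `n - 1`. Since `y` is the sum of `1` and
`-x²`, whose product is `-x²`, the last one, `yⁿ`, may be replaced by the power sum
`1 + (-1)ⁿ x²ⁿ`: for `n ≥ 1` the difference is a combination of the other monomials. Splitting the
power sum gives two terms. After induction, the term with `1` in the last column carries the
partitions of `𝒫ₙ` with an empty part appended. Moving `x²ⁿ` to the first column absorbs the sign
`(-1)ⁿ`, and that term carries the partitions of `𝒫ₙ` bordered by the hook `(n - 1 | n)`. Together
these are all of `𝒫ₙ₊₁`. Applying the resulting expansion to each of the two blocks of columns of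
the determinant proves the theorem.
-/

open Finset

section Alternating

variable {R S M N ι κ : Type*} [CommRing R] [CommRing S] [Algebra R S]
  [AddCommGroup M] [Module R M] [AddCommGroup N] [Module R N]

theorem map_snoc_eq_smul_map_cons {n : ℕ} (f : M [⋀^Fin (n + 1)]→ₗ[R] N) (v : Fin n → M)
    (m : M) :
    f (Fin.snoc (α := fun _ => M) v m) = (-1 : R) ^ n • f (Fin.cons (α := fun _ => M) m v) := by
  rw [Fin.snoc_eq_cons_rotate]
  refine (f.map_perm _ (finRotate (n + 1))).trans ?_
  rw [sign_finRotate, add_tsub_cancel_right, Units.smul_def, ← Int.cast_smul_eq_zsmul R]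
  push_cast
  rfl

/-- The alternating map in the second block of arguments obtained from an alternating map of two
blocks of arguments by fixing the first block; `MultilinearMap.currySum` as an alternating map. -/
def curryInr (f : M [⋀^ι ⊕ κ]→ₗ[R] N) (p : ι → M) : M [⋀^κ]→ₗ[R] N where
  __ := f.toMultilinearMap.currySum p
  map_eq_zero_of_eq' q i j hq hij :=
    f.map_eq_zero_of_eq (Sum.elim p q) (i := .inr i) (j := .inr j) hq (Sum.inr_injective.ne hij)

theorem curryInr_apply (f : M [⋀^ι ⊕ κ]→ₗ[R] N) (p : ι → M) (q : κ → M) :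
    curryInr f p q = f (Sum.elim p q) := rfl

theorem curryInr_sumComm_apply (f : M [⋀^ι ⊕ κ]→ₗ[R] N) (p : ι → M) (q : κ → M) :
    curryInr (f.domDomCongr (Equiv.sumComm ι κ)) q p = f (Sum.elim p q) := by
  rw [curryInr_apply, AlternatingMap.domDomCongr_apply]
  exact congrArg f (Sum.elim_swap)

/- The power sums `pₖ = u ^ k + v ^ k` satisfy `pₖ₊₂ = (u + v) pₖ₊₁ - u v pₖ`, so by induction
`(u + v) ^ k - pₖ` is, for `k > 0`, a combination of the monomials `x ^ i (u + v) ^ j` of degree `k`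
with `i > 0`. -/
theorem map_add_pow_eq_map_pow_add_pow {u v x : S} {c : R} (huv : u * v = c • x ^ 2) (n : ℕ)
    (g : S →ₗ[R] M) (hg : ∀ i j, i + j = n → g (x ^ (i + 1) * (u + v) ^ j) = 0) :
    g ((u + v) ^ (n + 1)) = g (u ^ (n + 1) + v ^ (n + 1)) := by
  induction n using Nat.twoStepInduction generalizing g with
  | zero => simp only [zero_add, pow_one]
  | one =>
    have huv0 : g (u * v) = 0 := by
      rw [huv, map_smul, show g (x ^ 2) = 0 by simpa using hg 1 0 rfl, smul_zero]
    calc g ((u + v) ^ 2)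
        = g (u ^ 2 + v ^ 2 + (u * v + u * v)) := by congr 1; ring
      _ = g (u ^ 2 + v ^ 2) := by rw [map_add, map_add g (u * v), huv0, add_zero, add_zero]
  | more n ih₀ ih₁ =>
    have h₁ : g ((u + v) * (u + v) ^ (n + 2)) = g ((u + v) * (u ^ (n + 2) + v ^ (n + 2))) :=
      ih₁ (g ∘ₗ LinearMap.mulLeft R (u + v)) fun i j hij => by
        simpa [pow_succ', mul_left_comm] using hg i (j + 1) (by omega)
    have h₀ : g (x ^ 2 * (u + v) ^ (n + 1)) = g (x ^ 2 * (u ^ (n + 1) + v ^ (n + 1))) :=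
      ih₀ (g ∘ₗ LinearMap.mulLeft R (x ^ 2)) fun i j hij => by
        simpa [← mul_assoc, ← pow_add, add_comm, add_left_comm] using hg (i + 2) j (by omega)
    have hlow : g (u * v * (u ^ (n + 1) + v ^ (n + 1))) = 0 := by
      rw [huv, smul_mul_assoc, map_smul, ← h₀, hg 1 (n + 1) (by omega), smul_zero]
    calc g ((u + v) ^ (n + 2 + 1))
        = g ((u + v) * (u ^ (n + 2) + v ^ (n + 2))) := by rw [pow_succ', h₁]
      _ = g (u ^ (n + 2 + 1) + v ^ (n + 2 + 1) + u * v * (u ^ (n + 1) + v ^ (n + 1))) := by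
        congr 1; ring
      _ = g (u ^ (n + 2 + 1) + v ^ (n + 2 + 1)) := by rw [map_add, hlow, add_zero]

end Alternating

section FrobeniusSet

variable {n : ℕ}

theorem mem_frobeniusSet {l : Fin n → Fin n} :
    l ∈ frobeniusSet n ↔ Antitone l ∧ ∀ i : Fin n, (i : ℕ) + 1 ≤ l i →
      #{j : Fin n | (i : ℕ) + 1 ≤ l j} = l i + 1 := by
  simp only [frobeniusSet, mem_filter_univ, Antitone]

/-- The partition `l` viewed with one more part, equal to `0`; its Young diagram and Frobenius
notation do not change. -/
def appendZero (l : Fin n → Fin n) : Fin (n + 1) → Fin (n + 1) :=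
  Fin.snoc (α := fun _ => Fin (n + 1)) (fun j => (l j).castSucc) 0

/-- The partition `l` bordered by a hook whose row has length `n` and whose column has length
`n + 1`: its Frobenius notation gains the entry `(n - 1 | n)`. -/
def prependHook (l : Fin n → Fin n) : Fin (n + 1) → Fin (n + 1) :=
  Fin.cons (α := fun _ => Fin (n + 1)) (Fin.last n) fun j => (l j).succ

theorem appendZero_injective : Function.Injective (appendZero (n := n)) := fun l l' h =>
  funext fun j => Fin.castSucc_injective n <| by simpa [appendZero] using congrFun h j.castSucc

theorem prependHook_injective : Function.Injective (prependHook (n := n)) := fun l l' h =>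
  funext fun j => Fin.succ_injective n <| by simpa [prependHook] using congrFun h j.succ

theorem appendZero_last (l : Fin n → Fin n) : appendZero l (Fin.last n) = 0 := by
  simp [appendZero]

theorem prependHook_last_ne_zero (hn : n ≠ 0) (l : Fin n → Fin n) :
    prependHook l (Fin.last n) ≠ 0 := by
  obtain ⟨m, rfl⟩ := Nat.exists_eq_succ_of_ne_zero hn
  exact Fin.succ_ne_zero (l (Fin.last m))

theorem appendZero_mem_frobeniusSet {l : Fin n → Fin n} :
    appendZero l ∈ frobeniusSet (n + 1) ↔ l ∈ frobeniusSet n := by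
  simp only [mem_frobeniusSet, card_filter, Antitone, Fin.forall_fin_succ', Fin.sum_univ_castSucc]
  simp [Fin.le_last, appendZero]

theorem prependHook_mem_frobeniusSet {l : Fin n → Fin n} :
    prependHook l ∈ frobeniusSet (n + 1) ↔ l ∈ frobeniusSet n := by
  have hanti : Antitone (prependHook l) ↔ Antitone l := by
    simp [Antitone, Fin.forall_fin_succ, prependHook, Fin.le_last]
  have hfirst (h : ((0 : Fin (n + 1)) : ℕ) + 1 ≤ prependHook l 0) :
      #{j | ((0 : Fin (n + 1)) : ℕ) + 1 ≤ prependHook l j} = (prependHook l 0 : ℕ) + 1 := by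
    rw [filter_true_of_mem, card_fin]
    · simp [prependHook]
    · simpa [Fin.forall_fin_succ, prependHook] using h
  have hsucc (i : Fin n) (hi : (i : ℕ) + 1 ≤ l i) :
      #{j | (i.succ : ℕ) + 1 ≤ prependHook l j} = #{j | (i : ℕ) + 1 ≤ l j} + 1 := by
    have hin : (i : ℕ) + 1 < n := hi.trans_lt (l i).2
    simp [Fin.card_filter_univ_succ, prependHook, hin]
  rw [mem_frobeniusSet, mem_frobeniusSet, hanti, Fin.forall_fin_succ]
  refine and_congr_right fun _ => (and_iff_right hfirst).trans (forall_congr' fun i => ?_)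
  have hval : (prependHook l i.succ : ℕ) = l i + 1 := rfl
  rw [hval]
  exact imp_congr_ctx Nat.add_le_add_iff_right fun hi => by
    rw [hsucc i hi, Nat.add_right_cancel_iff]

theorem first_part_eq_iff_last_part_ne_zero (hn : n ≠ 0) {l : Fin (n + 1) → Fin (n + 1)}
    (hl : l ∈ frobeniusSet (n + 1)) : l 0 = Fin.last n ↔ l (Fin.last n) ≠ 0 := by
  obtain ⟨hanti, hhook⟩ := mem_frobeniusSet.1 hl
  have hlast_le : l (Fin.last n) ≤ l 0 := hanti (Fin.zero_le _)
  by_cases h0 : l 0 = 0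
  · have hlast : l (Fin.last n) = 0 := Fin.le_zero_iff.1 (h0 ▸ hlast_le)
    simp [h0, hlast, Fin.ext_iff, hn.symm]
  have hcard : #{j | l j ≠ 0} = (l 0 : ℕ) + 1 := by
    simpa [Nat.one_le_iff_ne_zero, h0] using hhook 0
  calc l 0 = Fin.last n ↔ #{j | l j ≠ 0} = #(univ : Finset (Fin (n + 1))) := by
        rw [hcard, card_fin, Nat.succ_inj, Fin.ext_iff, Fin.val_last]
    _ ↔ ∀ j, l j ≠ 0 := by rw [card_filter_eq_iff]; simp
    _ ↔ l (Fin.last n) ≠ 0 :=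
        ⟨fun h => h _, fun h j => ((Fin.pos_iff_ne_zero.2 h).trans_le (hanti j.le_last)).ne'⟩

theorem filter_frobeniusSet_last_eq_zero (hn : n ≠ 0) :
    {l ∈ frobeniusSet (n + 1) | l (Fin.last n) = 0} = (frobeniusSet n).image appendZero := by
  ext l
  simp only [mem_filter, mem_image]
  refine ⟨fun ⟨hl, hlast⟩ => ?_, ?_⟩
  · have hne (j) : l j ≠ Fin.last n := fun hj =>
      (first_part_eq_iff_last_part_ne_zero hn hl).1 (Fin.last_le_iff.1 (hj.symm.trans_le
        ((mem_frobeniusSet.1 hl).1 (Fin.zero_le j)))) hlast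
    have heq : appendZero (fun j => (l j.castSucc).castPred (hne _)) = l := by
      ext j
      cases j using Fin.lastCases <;> simp [appendZero, hlast]
    exact ⟨_, appendZero_mem_frobeniusSet.1 (heq.symm ▸ hl), heq⟩
  · rintro ⟨l, hl, rfl⟩
    exact ⟨appendZero_mem_frobeniusSet.2 hl, appendZero_last l⟩

theorem filter_frobeniusSet_last_ne_zero (hn : n ≠ 0) :
    {l ∈ frobeniusSet (n + 1) | l (Fin.last n) ≠ 0} = (frobeniusSet n).image prependHook := by
  ext l
  simp only [mem_filter, mem_image]
  refine ⟨fun ⟨hl, hlast⟩ => ?_, ?_⟩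
  · have hne (j) : l j ≠ 0 := ((Fin.pos_iff_ne_zero.2 hlast).trans_le
      ((mem_frobeniusSet.1 hl).1 j.le_last)).ne'
    have heq : prependHook (fun j => (l j.succ).pred (hne _)) = l := by
      ext j
      have hfirst := (first_part_eq_iff_last_part_ne_zero hn hl).2 hlast
      cases j using Fin.cases <;> simp [prependHook, hfirst]
    exact ⟨_, prependHook_mem_frobeniusSet.1 (heq.symm ▸ hl), heq⟩
  · rintro ⟨l, hl, rfl⟩
    exact ⟨prependHook_mem_frobeniusSet.2 hl, prependHook_last_ne_zero hn l⟩

theorem sum_frobeniusSet_succ {M : Type*} [AddCommMonoid M] (hn : n ≠ 0)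
    (F : (Fin (n + 1) → Fin (n + 1)) → M) :
    ∑ l ∈ frobeniusSet (n + 1), F l =
      ∑ l ∈ frobeniusSet n, F (appendZero l) + ∑ l ∈ frobeniusSet n, F (prependHook l) := by
  rw [← sum_filter_add_sum_filter_not _ (fun l => l (Fin.last n) = 0),
    filter_frobeniusSet_last_eq_zero hn, filter_frobeniusSet_last_ne_zero hn,
    sum_image appendZero_injective.injOn, sum_image prependHook_injective.injOn]

end FrobeniusSet

section Expansion

variable {R S N : Type*} [CommRing R] [CommRing S] [Algebra R S] [AddCommGroup N] [Module R N]

/-- The monomials of degree `n` in `x` and `y`, in increasing order of the power of `y`. -/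
def binaryMonomials (x y : S) (n : ℕ) (j : Fin (n + 1)) : S := x ^ (n - (j : ℕ)) * y ^ (j : ℕ)

theorem binaryMonomials_succ (x y : S) (n : ℕ) :
    binaryMonomials x y (n + 1) =
      Fin.snoc (α := fun _ => S) (x • binaryMonomials x y n) (y ^ (n + 1)) := by
  ext j
  cases j using Fin.lastCases with
  | last => simp [binaryMonomials]
  | cast j => simp [binaryMonomials, Nat.succ_sub j.is_le, pow_succ', mul_assoc]

theorem map_binaryMonomials_add {u v x : S} {c : R} (huv : u * v = c • x ^ 2) (n : ℕ)
    (f : S [⋀^Fin (n + 2)]→ₗ[R] N) :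
    f (binaryMonomials x (u + v) (n + 1)) =
      f (Fin.snoc (α := fun _ => S) (x • binaryMonomials x (u + v) n)
        (u ^ (n + 1) + v ^ (n + 1))) := by
  let w := binaryMonomials x (u + v) (n + 1)
  let g : S →ₗ[R] N := f.toMultilinearMap.toLinearMap w (Fin.last (n + 1))
  have hg_snoc (y : S) :
      g y = f (Fin.snoc (α := fun _ => S) (x • binaryMonomials x (u + v) n) y) := by
    change f (Function.update w (Fin.last (n + 1)) y) = _
    rw [show w = _ from binaryMonomials_succ x (u + v) n, Fin.update_snoc_last]
  have hg_zero (i j : ℕ) (hij : i + j = n) : g (x ^ (i + 1) * (u + v) ^ j) = 0 := by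
    have hj : x ^ (i + 1) * (u + v) ^ j = w (Fin.castSucc ⟨j, by omega⟩) := by
      simp [w, binaryMonomials, show n + 1 - j = i + 1 by omega]
    rw [hj]
    exact f.map_update_self w (Fin.castSucc_lt_last _).ne'
  rw [binaryMonomials_succ, ← hg_snoc, ← hg_snoc]
  exact map_add_pow_eq_map_pow_add_pow huv n g hg_zero

theorem map_binaryMonomials_one_sub_sq_succ (x : S) (n : ℕ) (f : S [⋀^Fin (n + 2)]→ₗ[R] N) :
    f (binaryMonomials x (1 - x ^ 2) (n + 1)) =
      f (Fin.snoc (α := fun _ => S) (x • binaryMonomials x (1 - x ^ 2) n) 1) +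
        f (Fin.cons (α := fun _ => S) (x ^ (2 * (n + 1)))
          (x • binaryMonomials x (1 - x ^ 2) n)) := by
  have huv : (1 : S) * -x ^ 2 = (-1 : R) • x ^ 2 := by simp
  have hpow : (-x ^ 2) ^ (n + 1) = (-1 : R) ^ (n + 1) • x ^ (2 * (n + 1)) := by
    rw [neg_pow, ← pow_mul, Algebra.smul_def]
    simp
  have hsign : (-1 : R) ^ (n + 1) * (-1) ^ (n + 1) = 1 := by
    rw [← mul_pow, neg_one_mul, neg_neg, one_pow]
  rw [sub_eq_add_neg, map_binaryMonomials_add huv, one_pow, hpow]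
  refine (f.toMultilinearMap.snoc_add _ _ _).trans (congrArg _ ?_)
  refine (f.toMultilinearMap.snoc_smul _ _ _).trans ?_
  rw [AlternatingMap.coe_multilinearMap, map_snoc_eq_smul_map_cons, smul_smul, hsign, one_smul]

theorem sum_frobeniusSet_map_pow (x : S) (n : ℕ) (f : S [⋀^Fin (n + 1)]→ₗ[R] N) :
    ∑ l ∈ frobeniusSet (n + 1), f (fun j => x ^ ((l j : ℕ) + (n - (j : ℕ)))) =
      f (binaryMonomials x (1 - x ^ 2) n) := by
  induction n with
  | zero =>
    rw [show frobeniusSet 1 = {0} by decide, sum_singleton]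
    exact congrArg f (by ext j; simp [binaryMonomials])
  | succ n ih =>
    have hsnoc : f (Fin.snoc (α := fun _ => S) (x • binaryMonomials x (1 - x ^ 2) n) 1) =
        ∑ l ∈ frobeniusSet (n + 1),
          f (fun j => x ^ ((appendZero l j : ℕ) + (n + 1 - (j : ℕ)))) := by
      calc _ = (-1 : R) ^ (n + 1) • (f.curryLeft 1).compLinearMap (LinearMap.mulLeft R x)
            (binaryMonomials x (1 - x ^ 2) n) := map_snoc_eq_smul_map_cons f _ _
        _ = ∑ l ∈ frobeniusSet (n + 1), f (Fin.snoc (α := fun _ => S)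
            (x • fun j => x ^ ((l j : ℕ) + (n - (j : ℕ)))) 1) := by
          rw [← ih, smul_sum]
          exact sum_congr rfl fun l _ => (map_snoc_eq_smul_map_cons f _ _).symm
        _ = _ := by
          refine sum_congr rfl fun l _ => congrArg f (funext fun j => ?_)
          cases j using Fin.lastCases with
          | last => simp [appendZero]
          | cast j => simp [appendZero, Nat.succ_sub j.is_le, ← pow_succ', add_assoc]
    have hcons : f (Fin.cons (α := fun _ => S) (x ^ (2 * (n + 1)))
          (x • binaryMonomials x (1 - x ^ 2) n)) =
        ∑ l ∈ frobeniusSet (n + 1),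
          f (fun j => x ^ ((prependHook l j : ℕ) + (n + 1 - (j : ℕ)))) := by
      refine (ih ((f.curryLeft (x ^ (2 * (n + 1)))).compLinearMap
        (LinearMap.mulLeft R x))).symm.trans ?_
      refine sum_congr rfl fun l _ => congrArg f (funext fun j => ?_)
      cases j using Fin.cases with
      | zero => simp [prependHook, two_mul]
      | succ j => simp [prependHook, ← pow_succ', add_right_comm]
    rw [map_binaryMonomials_one_sub_sq_succ, hsnoc, hcons, sum_frobeniusSet_succ n.succ_ne_zero]

theorem sum_sum_frobeniusSet_map_pow (a x : S) (m n : ℕ)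
    (f : S [⋀^Fin (m + 1) ⊕ Fin (n + 1)]→ₗ[R] N) :
    ∑ l ∈ frobeniusSet (m + 1), ∑ l' ∈ frobeniusSet (n + 1),
        f (Sum.elim (a • fun j => x ^ ((l j : ℕ) + (m - (j : ℕ))))
          fun j => x ^ ((l' j : ℕ) + (n - (j : ℕ)))) =
      f (Sum.elim (a • binaryMonomials x (1 - x ^ 2) m) (binaryMonomials x (1 - x ^ 2) n)) := by
  let f₁ (q : Fin (n + 1) → S) : S [⋀^Fin (m + 1)]→ₗ[R] N :=
    (curryInr (f.domDomCongr (Equiv.sumComm _ _)) q).compLinearMap (LinearMap.mulLeft R a)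
  have hf₁ (p q) : f (Sum.elim (a • p) q) = f₁ q p := (curryInr_sumComm_apply f (a • p) q).symm
  simp only [← curryInr_apply f, sum_frobeniusSet_map_pow]
  simp only [curryInr_apply f, hf₁, sum_frobeniusSet_map_pow]

end Expansion

/-- The determinant of a `2n × 2n` matrix as an alternating map of its columns, the columns being
indexed in two blocks of `n`. -/
def columnDet (R : Type*) [CommRing R] (n : ℕ) :
    (Fin (2 * n) → R) [⋀^Fin n ⊕ Fin n]→ₗ[R] R :=
  Matrix.detRowAlternating.domDomCongr
    (finSumFinEquiv.trans (finCongr (two_mul n).symm)).symm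

theorem columnDet_sum_elim {R : Type*} [CommRing R] {n : ℕ} (p q : Fin n → Fin (2 * n) → R) :
    columnDet R n (Sum.elim p q) = Matrix.det (Matrix.of fun i j : Fin (2 * n) =>
      if h : (j : ℕ) < n then p ⟨j, h⟩ i else q ⟨(j : ℕ) - n, by have := j.2; omega⟩ i) := by
  rw [← Matrix.det_transpose]
  refine congrArg Matrix.det (Matrix.ext fun j i => ?_)
  obtain ⟨k, rfl⟩ := (finSumFinEquiv.trans (finCongr (two_mul n).symm)).surjective j
  cases k <;> simp [-Fin.natAdd_eq_addNat]

/-- Theorem `det_exp`: `U^n(X;A) = V^n(X, 1−X²; A, 1)`,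
a polynomial identity (stated over an arbitrary commutative ring). -/
theorem Un_eq_Vdet (R : Type*) [CommRing R] (n : ℕ) (hn : 1 ≤ n)
    (x a : Fin (2 * n) → R) :
    Un n x a = Vdet n x (fun i => 1 - x i ^ 2) a 1 := by
  obtain ⟨n, rfl⟩ := Nat.exists_eq_add_of_le' hn
  have hU (l m : Fin (n + 1) → Fin (n + 1)) :
      altDet (n + 1) (fun j => (l j : ℕ) + (n - j)) (fun j => (m j : ℕ) + (n - j)) x a =
        columnDet R (n + 1) (Sum.elim (a • fun j => x ^ ((l j : ℕ) + (n - (j : ℕ))))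
          fun j => x ^ ((m j : ℕ) + (n - (j : ℕ)))) := by
    rw [columnDet_sum_elim]
    rfl
  have hV : Vdet (n + 1) x (fun i => 1 - x i ^ 2) a 1 =
      columnDet R (n + 1) (Sum.elim (a • binaryMonomials x (1 - x ^ 2) n)
        (binaryMonomials x (1 - x ^ 2) n)) := by
    rw [columnDet_sum_elim, Vdet]
    congr 2
    ext i j
    split_ifs with hj
    · simp [binaryMonomials, mul_assoc]
    · simp [binaryMonomials, show 2 * (n + 1) - 1 - (j : ℕ) = n - (j - (n + 1)) by omega]
  rw [hV, ← sum_sum_frobeniusSet_map_pow, Un]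
  simp only [add_tsub_cancel_right, hU]
end

section
/- Let n ≥ 1 and let x_1,...,x_{2n}, a_1,...,a_{2n} be variables. Then U^n(X;A) = Σ_{I ⊆ [2n], |I|=n} (−1)^{Σ_{i∈I} i + n(n+1)/2} (Π_{i∈I} a_i) · Π_{i<j, i,j∈I}(x_i − x_j)(1 + x_i x_j) · Π_{i<j, i,j∈I^c}(x_i − x_j)(1 + x_i x_j). -/
open Finset

/-!
Expanding each `2n × 2n` alternant by Laplace along its left block of columns turns `U^n` into a
sum over `I` of products of two sums over `𝒫_n`, each a sum of maximal minors
`det (x_i ^ (λ + δ)_j)`. So everything reduces to Littlewood's identity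
`∑ λ ∈ 𝒫_n, det (x_i ^ (λ + δ)_j) = ∏ i < j, (x_i - x_j) (1 + x_i x_j)`.

For the latter, put `D = det (x_i ^ (n-1-k) + (-1) ^ k x_i ^ (n-1+k))`, where the column `k = 0` is
just `x_i ^ (n-1)`. After division by `x_i ^ (n-1)` the columns are Dickson polynomials in
`x_i⁻¹ - x_i`, monic of degree `k`, so `D` is a homogenized Vandermonde determinant and equals the
product side. Expanding the columns of `D` instead gives, for each set `s` of positive `k`, the
alternant with exponents `n-1+k` for `k ∈ s` and `n-1-k` for `k ∉ s`. Sorting these exponents gives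
the sign `∏ k ∈ s, (-1) ^ k` and a shifted partition `λ + δ`; the `λ` so obtained are those for
which the `λ_j - j` (`j` from `0`) have distinct absolute values, and these are exactly the elements
of `𝒫_n`.
-/

section Dickson

open Polynomial

variable {R : Type*} [CommRing R]

theorem natDegree_dickson_le (k : ℕ) (a : R) : ∀ n, (dickson k a n).natDegree ≤ n
  | 0 => by simpa using natDegree_sub_le (3 : R[X]) (k : R[X])
  | 1 => by simpa using natDegree_X_le
  | n + 2 => by
    rw [dickson_add_two]
    have hX : (X * dickson k a (n + 1)).natDegree ≤ n + 2 :=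
      natDegree_mul_le.trans (by grind [natDegree_X_le (R := R), natDegree_dickson_le k a (n + 1)])
    have hC : (C a * dickson k a n).natDegree ≤ n + 2 :=
      (natDegree_C_mul_le _ _).trans ((natDegree_dickson_le k a n).trans (by omega))
    exact natDegree_sub_le_of_le hX hC |>.trans (by simp)

theorem coeff_dickson_succ_self (k : ℕ) (a : R) (n : ℕ) :
    (dickson k a (n + 1)).coeff (n + 1) = 1 := by
  induction n with
  | zero => simp
  | succ n ih =>
    have hlow : (dickson k a n).coeff (n + 2) = 0 :=
      coeff_eq_zero_of_natDegree_lt ((natDegree_dickson_le k a n).trans_lt (by omega))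
    simp [ih, hlow, coeff_X_mul]

theorem homogenize_eq_mul_X_pow {p : R[X]} {m n : ℕ} (hp : p.natDegree ≤ m) (hmn : m ≤ n) :
    p.homogenize n = p.homogenize m * MvPolynomial.X 1 ^ (n - m) := by
  obtain ⟨d, rfl⟩ := Nat.exists_eq_add_of_le hmn
  simpa using homogenize_mul p 1 hp (natDegree_one.trans_le (Nat.zero_le d))

/-- Homogenized form of `D_k(y + z, yz) = y ^ k + z ^ k`, with `y = x⁻¹` and `z = a * x`. -/
theorem eval_homogenize_dickson_one (a x : R) (k : ℕ) :
    MvPolynomial.eval ![1 + a * x ^ 2, x] ((dickson 1 a k).homogenize k) =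
      1 + (a * x ^ 2) ^ k := by
  induction k using Nat.twoStepInduction with
  | zero =>
    have hD : dickson 1 a 0 = C 2 := by
      rw [dickson_zero, ← map_ofNat C 3, ← map_natCast C, ← map_sub]
      norm_num
    simp [hD, homogenize_C, one_add_one_eq_two]
  | one => simp
  | more k ih₀ ih₁ =>
    have hX : (X * dickson 1 a (k + 1)).homogenize (k + 2) =
        MvPolynomial.X 0 * (dickson 1 a (k + 1)).homogenize (k + 1) := by
      simpa [add_comm, add_left_comm] using
        homogenize_mul X _ natDegree_X_le (natDegree_dickson_le 1 a (k + 1))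
    rw [dickson_add_two, homogenize_sub, hX, homogenize_C_mul,
      homogenize_eq_mul_X_pow (natDegree_dickson_le 1 a k) (Nat.le_add_right k 2)]
    simp only [map_sub, map_mul, map_pow, MvPolynomial.eval_X, MvPolynomial.eval_C, ih₀, ih₁,
      Matrix.cons_val_zero, Matrix.cons_val_one, Nat.add_sub_cancel_left]
    ring

theorem mvPolynomial_eval_homogenize_eq_sum {n : ℕ} (p : R[X]) (f : Fin 2 → R) :
    MvPolynomial.eval f (p.homogenize n) = ∑ i : Fin (n + 1), f 0 ^ (i : ℕ) * f 1 ^ (n - i) *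
      p.coeff i := by
  simp only [homogenize, map_sum, Finset.Nat.sum_antidiagonal_eq_sum_range_succ_mk]
  rw [Fin.sum_univ_eq_sum_range (fun i => f 0 ^ i * f 1 ^ (n - i) * p.coeff i)]
  refine sum_congr rfl fun i _ => ?_
  rw [MvPolynomial.eval_monomial, Finsupp.update_eq_add_single (by simp),
    Finsupp.prod_add_index' (by simp) (by simp [pow_add])]
  simp [mul_comm]

theorem det_eval_homogenize {n : ℕ} (v w : Fin n → R) (p : Fin n → R[X])
    (hdeg : ∀ j, (p j).natDegree ≤ j) (hcoeff : ∀ j, (p j).coeff j = 1) :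
    (Matrix.of fun i j => MvPolynomial.eval ![v i, w i] ((p j).homogenize (n - 1))).det =
      (Matrix.projVandermonde v w).det := by
  let C : Matrix (Fin n) (Fin n) R := Matrix.of fun i j => (p j).coeff i
  have hfactor : (Matrix.of fun i j => MvPolynomial.eval ![v i, w i] ((p j).homogenize (n - 1))) =
      Matrix.projVandermonde v w * C := by
    cases n with
    | zero => exact Subsingleton.elim _ _
    | succ n =>
      ext i j
      simp [C, Matrix.mul_apply, mvPolynomial_eval_homogenize_eq_sum,
        Matrix.projVandermonde_apply, Fin.val_rev]
  have hC : C.BlockTriangular id := fun i j hij =>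
    coeff_eq_zero_of_natDegree_lt ((hdeg j).trans_lt hij)
  rw [hfactor, Matrix.det_mul, Matrix.det_of_isUpperTriangular hC]
  simp [C, hcoeff]

theorem det_pow_add_pow_reflect {n : ℕ} (a : R) (x : Fin n → R) :
    (Matrix.of fun i k : Fin n => x i ^ (n - 1 - (k : ℕ)) +
      if 0 < (k : ℕ) then a ^ (k : ℕ) * x i ^ (n - 1 + (k : ℕ)) else 0).det =
    ∏ i, ∏ j ∈ Ioi i, (x i - x j) * (1 - a * x i * x j) := by
  let p (k : ℕ) : R[X] := if 0 < k then dickson 1 a k else 1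
  have hdeg (k : ℕ) : (p k).natDegree ≤ k := by
    by_cases hk : 0 < k <;> simp [p, hk, natDegree_dickson_le]
  have hcoeff : ∀ k, (p k).coeff k = 1
    | 0 => by simp [p]
    | k + 1 => by simp only [p, Nat.succ_pos, if_true, coeff_dickson_succ_self]
  have hentry (y : R) (k : Fin n) :
      MvPolynomial.eval ![1 + a * y ^ 2, y] ((p k).homogenize (n - 1)) =
        y ^ (n - 1 - (k : ℕ)) + if 0 < (k : ℕ) then a ^ (k : ℕ) * y ^ (n - 1 + (k : ℕ)) else 0 := by
    have hkn : (k : ℕ) ≤ n - 1 := by omega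
    have hexp : n - 1 + (k : ℕ) = (n - 1 - k) + 2 * k := by omega
    by_cases hk : 0 < (k : ℕ)
    · simp only [p, hk, if_true, homogenize_eq_mul_X_pow (natDegree_dickson_le 1 a k) hkn, map_mul,
        eval_homogenize_dickson_one, map_pow, MvPolynomial.eval_X, Matrix.cons_val_one,
        Matrix.cons_val_fin_one, hexp]
      ring
    · simp [p, Nat.eq_zero_of_not_pos hk]
  simp only [← hentry]
  rw [det_eval_homogenize (fun i => 1 + a * x i ^ 2) x (fun k => p k) (fun k => hdeg k)
    (fun k => hcoeff k), Matrix.det_projVandermonde]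
  exact prod_congr rfl fun i _ => prod_congr rfl fun j _ => by ring

end Dickson

section Signs

open Equiv

theorem sign_eq_prod_prod_ite {N : ℕ} (π : Perm (Fin N)) :
    Perm.sign π = ∏ p, ∏ q, if p < q ∧ π q < π p then (-1 : ℤˣ) else 1 := by
  rw [Perm.sign_eq_prod_prod_Ioi]
  refine prod_congr rfl fun p _ => ?_
  rw [← filter_lt_eq_Ioi, prod_filter]
  refine prod_congr rfl fun q _ => ?_
  have := π.injective.ne_iff (x := p) (y := q)
  grind

theorem sign_eq_prod_of_forall_inversion_iff {n : ℕ} (σ : Perm (Fin n)) (s : Finset (Fin n))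
    (h : ∀ i j, i < j → (σ i < σ j ↔ j ∉ s)) :
    Perm.sign σ = ∏ j ∈ s, (-1 : ℤˣ) ^ (j : ℕ) := by
  rw [Perm.sign_eq_prod_prod_Iio, ← prod_subset (subset_univ s) fun j _ hj => ?_]
  · refine prod_congr rfl fun j hj => ?_
    rw [prod_congr rfl fun i hi => if_neg ((h i j (mem_Iio.1 hi)).not.2 (not_not.2 hj)),
      prod_const, Fin.card_Iio]
  · exact prod_eq_one fun i hi => if_pos ((h i j (mem_Iio.1 hi)).2 hj)

theorem sum_card_filter_lt {α : Type*} [LinearOrder α] (s : Finset α) :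
    ∑ i ∈ s, #{j ∈ s | j < i} = ∑ k ∈ range #s, k := by
  induction s using Finset.induction_on_max with
  | empty => simp
  | insert a s ha ih =>
    have has : a ∉ s := fun h => lt_irrefl a (ha a h)
    have hnew : #{j ∈ insert a s | j < a} = #s := by
      rw [filter_insert, if_neg (lt_irrefl a), filter_true_of_mem ha]
    have hold : ∀ i ∈ s, #{j ∈ insert a s | j < i} = #{j ∈ s | j < i} := fun i hi => by
      rw [filter_insert, if_neg (ha i hi).not_gt]
    rw [sum_insert has, card_insert_of_notMem has, sum_range_succ, ← ih, hnew, sum_congr rfl hold,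
      add_comm]

theorem sum_card_compl_filter_lt_add {N : ℕ} (I : Finset (Fin N)) :
    ∑ i ∈ I, #{j ∈ Iᶜ | j < i} + ∑ k ∈ range #I, k = ∑ i ∈ I, (i : ℕ) := by
  rw [← sum_card_filter_lt, ← sum_add_distrib]
  refine sum_congr rfl fun i _ => ?_
  rw [← card_union_of_disjoint (disjoint_filter_filter disjoint_compl_left), ← filter_union,
    union_comm, union_compl, filter_gt_eq_Iio, Fin.card_Iio]

theorem neg_one_pow_sum_card_compl_filter_lt {N : ℕ} (I : Finset (Fin N)) :
    (-1 : ℤˣ) ^ ∑ i ∈ I, #{j ∈ Iᶜ | j < i} =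
      (-1) ^ (∑ i ∈ I, ((i : ℕ) + 1) + #I * (#I + 1) / 2) := by
  have htri : #I * (#I + 1) / 2 = ∑ k ∈ range #I, k + #I := by
    rw [← sum_range_succ (fun k => k), sum_range_id, Nat.add_sub_cancel, mul_comm]
  rw [htri, sum_add_distrib, ← sum_card_compl_filter_lt_add, sum_const, smul_eq_mul, mul_one]
  have hsplit (p t c : ℕ) : p + t + c + (t + c) = p + 2 * (t + c) := by ring
  rw [hsplit, pow_add, pow_mul, neg_one_sq, one_pow, mul_one]

end Signs

section Laplace

variable {m n N : ℕ}

theorem prod_orderEmbOfFin {ι M : Type*} [LinearOrder ι] [CommMonoid M] (s : Finset ι) (h : #s = n)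
    (f : ι → M) : ∏ p, f (s.orderEmbOfFin h p) = ∏ i ∈ s, f i := by
  conv_rhs => rw [← map_orderEmbOfFin_univ s h, prod_map]
  rfl

theorem prod_prod_Ioi_orderEmbOfFin {ι M : Type*} [LinearOrder ι] [CommMonoid M] (s : Finset ι)
    (h : #s = n) (f : ι → ι → M) :
    ∏ p, ∏ q ∈ Ioi p, f (s.orderEmbOfFin h p) (s.orderEmbOfFin h q) =
      ∏ i ∈ s, ∏ j ∈ s with i < j, f i j := by
  rw [← prod_orderEmbOfFin s h]
  refine prod_congr rfl fun p _ => ?_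
  rw [prod_filter, ← prod_orderEmbOfFin s h, ← filter_lt_eq_Ioi, prod_filter]
  simp only [OrderEmbedding.lt_iff_lt]

/-- The order-preserving concatenation of a block of `m` and a block of `n` column indices. -/
def blockEquiv (h : m + n = N) : Fin m ⊕ Fin n ≃ Fin N :=
  finSumFinEquiv.trans (finCongr h)

@[simp]
theorem blockEquiv_inl (h : m + n = N) (p : Fin m) : (blockEquiv h (.inl p) : ℕ) = p := by
  simp [blockEquiv]

@[simp]
theorem blockEquiv_inr (h : m + n = N) (p : Fin n) : (blockEquiv h (.inr p) : ℕ) = m + p := by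
  simp [blockEquiv]

theorem sign_blockEquiv_symm_trans_finSumEquivOfFinset (h : m + n = N) {I : Finset (Fin N)}
    (hI : #I = m) (hIc : #Iᶜ = n) :
    Equiv.Perm.sign ((blockEquiv h).symm.trans (finSumEquivOfFinset hI hIc)) =
      (-1) ^ (∑ i ∈ I, ((i : ℕ) + 1) + m * (m + 1) / 2) := by
  set π := (blockEquiv h).symm.trans (finSumEquivOfFinset hI hIc)
  have hπ_apply (u) : π (blockEquiv h u) = finSumEquivOfFinset hI hIc u := by simp [π]
  have hcross (p : Fin m) (q : Fin n) : blockEquiv h (.inl p) < blockEquiv h (.inr q) := by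
    simp only [Fin.lt_def, blockEquiv_inl, blockEquiv_inr]; omega
  have hinl (p q : Fin m) : blockEquiv h (.inl p) < blockEquiv h (.inl q) ↔ p < q := by
    simp only [Fin.lt_def, blockEquiv_inl]
  have hinr (p q : Fin n) : blockEquiv h (.inr p) < blockEquiv h (.inr q) ↔ p < q := by
    simp only [Fin.lt_def, blockEquiv_inr, Nat.add_lt_add_iff_left]
  have hsame {k : ℕ} (p q : Fin k) : ¬(p < q ∧ q < p) := not_and.2 lt_asymm
  have hinv : Equiv.Perm.sign π = ∏ i ∈ I, ∏ j ∈ Iᶜ, if j < i then (-1 : ℤˣ) else 1 := by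
    simp_rw [sign_eq_prod_prod_ite, ← (blockEquiv h).prod_comp, hπ_apply, Fintype.prod_sum_type,
      finSumEquivOfFinset_inl, finSumEquivOfFinset_inr, OrderEmbedding.lt_iff_lt, hinl, hinr,
      (hcross _ _).not_gt, hcross, ← prod_orderEmbOfFin I hI, ← prod_orderEmbOfFin Iᶜ hIc]
    simp only [hsame, true_and, false_and, if_false, prod_const_one, one_mul, mul_one]
  rw [hinv, ← hI, ← neg_one_pow_sum_card_compl_filter_lt, ← prod_pow_eq_pow_sum]
  simp only [← prod_filter, prod_const]

variable {R : Type*} [CommRing R]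

/-- The maximal minor of the `ι × n` matrix `A` on the rows `I`, taken in increasing order; it is
`0` by convention when `I` does not have exactly `n` elements. -/
def rowMinor {ι : Type*} [LinearOrder ι] (A : Matrix ι (Fin n) R) (I : Finset ι) : R :=
  if h : #I = n then (A.submatrix (I.orderEmbOfFin h) id).det else 0

theorem rowMinor_mul_column {ι : Type*} [LinearOrder ι] (a : ι → R) (A : Matrix ι (Fin n) R)
    (I : Finset ι) :
    rowMinor (Matrix.of fun i j => a i * A i j) I = (∏ i ∈ I, a i) * rowMinor A I := by
  by_cases h : #I = n
  · simp only [rowMinor, h, dite_true, ← prod_orderEmbOfFin I h]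
    exact Matrix.det_mul_column (fun p => a (I.orderEmbOfFin h p)) _
  · simp [rowMinor, h]

theorem det_eq_zero_of_forall_notMem_eq_zero {ι : Type*} [Fintype ι] [DecidableEq ι]
    {M : Matrix ι ι R} {I J : Finset ι} (hcard : #J < #I) (hM : ∀ i ∈ I, ∀ j ∉ J, M i j = 0) :
    M.det = 0 := by
  rw [← Matrix.det_transpose, Matrix.det_apply]
  refine sum_eq_zero fun σ _ => ?_
  obtain ⟨i, hi, hσi⟩ : ∃ i ∈ I, σ i ∉ J := by
    by_contra! hσ
    exact hcard.not_ge (card_le_card_of_injOn σ hσ σ.injective.injOn)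
  rw [prod_eq_zero (mem_univ i) (by simpa using hM i hi _ hσi), smul_zero]

/-- The rows of `[A | 0]` indexed by `I` together with the rows of `[0 | B]` indexed by `Iᶜ`: the
contribution of `I` to the multilinear expansion of `[A | B] = [A | 0] + [0 | B]`. -/
def maskedMatrix (h : m + n = N) (A : Matrix (Fin N) (Fin m) R) (B : Matrix (Fin N) (Fin n) R)
    (I : Finset (Fin N)) : Matrix (Fin N) (Fin N) R :=
  Matrix.of (I.piecewise (fun i => Sum.elim (A i) (0 : Fin n → R) ∘ (blockEquiv h).symm)
    fun i => Sum.elim (0 : Fin m → R) (B i) ∘ (blockEquiv h).symm)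

theorem det_fromCols_eq_sum_det_maskedMatrix (h : m + n = N) (A : Matrix (Fin N) (Fin m) R)
    (B : Matrix (Fin N) (Fin n) R) :
    ((Matrix.fromCols A B).submatrix id (blockEquiv h).symm).det =
      ∑ I, (maskedMatrix h A B I).det := by
  have hrows : (Matrix.fromCols A B).submatrix id (blockEquiv h).symm =
      Matrix.of ((fun i => Sum.elim (A i) (0 : Fin n → R) ∘ (blockEquiv h).symm) +
        fun i => Sum.elim (0 : Fin m → R) (B i) ∘ (blockEquiv h).symm) := by
    ext i j
    obtain ⟨u | u, rfl⟩ := (blockEquiv h).surjective j <;> simp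
  rw [hrows]
  exact Matrix.detRowAlternating.map_add_univ _ _

theorem det_maskedMatrix_of_card_ne (h : m + n = N) (A : Matrix (Fin N) (Fin m) R)
    (B : Matrix (Fin N) (Fin n) R) {I : Finset (Fin N)} (hI : #I ≠ m) :
    (maskedMatrix h A B I).det = 0 := by
  have hIc : #Iᶜ = N - #I := by rw [card_compl, Fintype.card_fin]
  let left : Finset (Fin N) := univ.map (Function.Embedding.inl.trans (blockEquiv h).toEmbedding)
  let right : Finset (Fin N) := univ.map (Function.Embedding.inr.trans (blockEquiv h).toEmbedding)
  rcases hI.lt_or_gt with hlt | hgt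
  · refine det_eq_zero_of_forall_notMem_eq_zero (I := Iᶜ) (J := right) ?_ fun i hi j hj => ?_
    · simp only [right, card_map, card_univ, Fintype.card_fin]; omega
    · obtain ⟨u | u, rfl⟩ := (blockEquiv h).surjective j
      · simp [maskedMatrix, mem_compl.1 hi]
      · exact absurd (mem_map_of_mem _ (mem_univ u)) hj
  · refine det_eq_zero_of_forall_notMem_eq_zero (I := I) (J := left) ?_ fun i hi j hj => ?_
    · simpa [left] using hgt
    · obtain ⟨u | u, rfl⟩ := (blockEquiv h).surjective j
      · exact absurd (mem_map_of_mem _ (mem_univ u)) hj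
      · simp [maskedMatrix, hi]

theorem det_maskedMatrix_of_card_eq (h : m + n = N) (A : Matrix (Fin N) (Fin m) R)
    (B : Matrix (Fin N) (Fin n) R) {I : Finset (Fin N)} (hI : #I = m) :
    (maskedMatrix h A B I).det =
      (-1) ^ (∑ i ∈ I, ((i : ℕ) + 1) + m * (m + 1) / 2) * rowMinor A I * rowMinor B Iᶜ := by
  have hIc : #Iᶜ = n := by rw [card_compl, Fintype.card_fin]; omega
  set π := (blockEquiv h).symm.trans (finSumEquivOfFinset hI hIc)
  have hblocks : ((maskedMatrix h A B I).submatrix π id).submatrix (blockEquiv h) (blockEquiv h) =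
      Matrix.fromBlocks (A.submatrix (I.orderEmbOfFin hI) id) 0 0
        (B.submatrix (Iᶜ.orderEmbOfFin hIc) id) := by
    have hmem (p) : I.orderEmbOfFin hI p ∈ I := orderEmbOfFin_mem _ _ _
    have hnotMem (p) : Iᶜ.orderEmbOfFin hIc p ∉ I := mem_compl.1 (orderEmbOfFin_mem _ _ _)
    ext (u | u) (v | v) <;> simp [maskedMatrix, π, hmem, hnotMem]
  have hdet := Matrix.det_permute π (maskedMatrix h A B I)
  rw [← Matrix.det_submatrix_equiv_self (blockEquiv h), hblocks, Matrix.det_fromBlocks_zero₂₁,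
    sign_blockEquiv_symm_trans_finSumEquivOfFinset] at hdet
  simp only [rowMinor, hI, hIc, dite_true]
  rw [mul_assoc, hdet, ← mul_assoc]
  push_cast
  rw [← mul_pow, neg_one_mul, neg_neg, one_pow, one_mul]

theorem det_fromCols_eq_sum_rowMinor_mul_rowMinor (h : m + n = N) (A : Matrix (Fin N) (Fin m) R)
    (B : Matrix (Fin N) (Fin n) R) :
    ((Matrix.fromCols A B).submatrix id (blockEquiv h).symm).det =
      ∑ I ∈ univ.powersetCard m (α := Fin N), (-1) ^ (∑ i ∈ I, ((i : ℕ) + 1) + m * (m + 1) / 2) *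
        rowMinor A I * rowMinor B Iᶜ := by
  rw [det_fromCols_eq_sum_det_maskedMatrix, eq_comm]
  refine sum_subset_zero_on_sdiff (subset_univ _) (fun I hI => ?_) fun I hI => ?_
  · exact det_maskedMatrix_of_card_ne h A B (by simpa using hI)
  · exact (det_maskedMatrix_of_card_eq h A B (mem_powersetCard.1 hI).2).symm

end Laplace

section Partitions

variable {n : ℕ}

theorem iff_val_lt_card_filter_of_antitone {p : Fin n → Prop} [DecidablePred p] (hp : Antitone p)
    (j : Fin n) : p j ↔ (j : ℕ) < #{i | p i} := by
  constructor <;> intro hj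
  · have hsub : Iic j ⊆ ({i | p i} : Finset (Fin n)) := fun i hi =>
      mem_filter.2 ⟨mem_univ i, hp (mem_Iic.1 hi) hj⟩
    simpa [Nat.succ_le_iff] using card_le_card hsub
  · by_contra hpj
    have hsub : ({i | p i} : Finset (Fin n)) ⊆ Iio j := fun i hi =>
      mem_Iio.2 (lt_of_not_ge fun hij => hpj (hp hij (mem_filter.1 hi).2))
    exact hj.not_ge (by simpa using card_le_card hsub)

/-- The absolute value of `l j - j`, the content of the first box to the right of row `j` (rows and
columns being numbered from `0`). -/
def absContent (l : Fin n → Fin n) (j : Fin n) : Fin n :=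
  ⟨((l j : ℤ) - j).natAbs, by omega⟩

theorem val_absContent (l : Fin n → Fin n) (j : Fin n) :
    (absContent l j : ℕ) = ((l j : ℤ) - j).natAbs := rfl

theorem absContent_injective_of_mem_frobeniusSet {l : Fin n → Fin n} (hl : l ∈ frobeniusSet n) :
    Function.Injective (absContent l) := by
  obtain ⟨hanti, hhook⟩ := (mem_filter.1 hl).2
  refine Function.Injective.of_lt_imp_ne fun i j hij habs => ?_
  have : (i : ℕ) < j := hij
  have hle : (l j : ℕ) ≤ l i := hanti i j hij.le
  have habs' := congrArg Fin.val habs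
  simp only [val_absContent] at habs'
  have hi : (i : ℕ) + 1 ≤ l i := by omega
  have hrows : (i : ℕ) + 1 ≤ l j ↔ (j : ℕ) < l i + 1 := by
    rw [← hhook i hi]
    exact iff_val_lt_card_filter_of_antitone
      (fun p q hpq (hq : (i : ℕ) + 1 ≤ l q) => hq.trans (hanti p q hpq)) j
  omega

theorem add_ne_add_of_injective_absContent {l : Fin n → Fin n}
    (hinj : Function.Injective (absContent l)) {i : Fin n} (hi : (i : ℕ) < l i) (j : Fin n) :
    (l j : ℕ) + l i ≠ i + j := fun h => by
  obtain rfl : j = i := hinj (Fin.ext (by simp only [val_absContent]; omega))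
  omega

/-- Besides the rows above `i`, the rows counted are those with `|l j - j| ≤ l i - i`, and there
are `l i - i + 1` of these since every absolute value occurs once. -/
theorem card_filter_add_lt_add {l : Fin n → Fin n} (hanti : Antitone l)
    (hinj : Function.Injective (absContent l)) {i : Fin n} (hi : (i : ℕ) < l i) :
    #{j : Fin n | (i : ℕ) + j < l j + l i} = l i + 1 := by
  have hle (j : Fin n) (hij : i ≤ j) : (l j : ℕ) ≤ l i := hanti hij
  have hge (j : Fin n) (hji : j < i) : (l i : ℕ) ≤ l j := hanti hji.le
  have hunion : ({j : Fin n | (i : ℕ) + j < l j + l i} : Finset (Fin n)) =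
      ({j | absContent l j ≤ absContent l i} : Finset (Fin n)) ∪ Iio i := by
    ext j
    have := add_ne_add_of_injective_absContent hinj hi j
    have := hle j
    have := hge j
    simp only [mem_filter_univ, mem_union, mem_Iio, Fin.le_def, Fin.lt_def, val_absContent] at *
    omega
  have hdisj : Disjoint ({j | absContent l j ≤ absContent l i} : Finset (Fin n)) (Iio i) := by
    refine disjoint_left.2 fun j hj hji => ?_
    have := hge j (mem_Iio.1 hji)
    simp only [mem_filter_univ, mem_Iio, Fin.le_def, Fin.lt_def, val_absContent] at *
    omega
  rw [hunion, card_union_of_disjoint hdisj,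
    card_bijective _ (Finite.injective_iff_bijective.1 hinj) (t := Iic (absContent l i)) (by simp),
    Fin.card_Iic, Fin.card_Iio, val_absContent]
  omega

theorem mem_frobeniusSet_of_antitone_of_injective {l : Fin n → Fin n} (hanti : Antitone l)
    (hinj : Function.Injective (absContent l)) : l ∈ frobeniusSet n := by
  refine mem_filter.2 ⟨mem_univ l, fun i j hij => hanti hij, fun i hi => ?_⟩
  have hpred : Antitone fun j : Fin n => (i : ℕ) + j < l j + l i := fun p q hpq hq => by
    have : (l q : ℕ) ≤ l p := hanti hpq
    have : (p : ℕ) ≤ q := hpq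
    dsimp only at hq ⊢
    omega
  have hrows (j : Fin n) : (i : ℕ) + j < l j + l i ↔ (j : ℕ) < l i + 1 := by
    rw [iff_val_lt_card_filter_of_antitone hpred, card_filter_add_lt_add hanti hinj hi]
  rw [← card_filter_add_lt_add hanti hinj hi]
  refine congrArg card (filter_congr fun j _ => ?_)
  rw [hrows]
  rcases lt_or_ge (l i) j with hj | hj
  · have hnext : (l i : ℕ) + 1 < n := by omega
    have hle : (l j : ℕ) ≤ l ⟨l i + 1, hnext⟩ := hanti (Nat.succ_le_iff.2 hj)
    have hcontent := hrows ⟨l i + 1, hnext⟩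
    have hne := add_ne_add_of_injective_absContent hinj hi ⟨l i + 1, hnext⟩
    simp only [Fin.lt_def] at hj hcontent hne
    omega
  · have hle : (l (l i) : ℕ) ≤ l j := hanti hj
    have hcontent := hrows (l i)
    simp only [Fin.le_def] at hj
    omega

theorem mem_frobeniusSet_iff {l : Fin n → Fin n} :
    l ∈ frobeniusSet n ↔ Antitone l ∧ Function.Injective (absContent l) :=
  ⟨fun hl => ⟨fun i j => (mem_filter.1 hl).2.1 i j, absContent_injective_of_mem_frobeniusSet hl⟩,
    fun h => mem_frobeniusSet_of_antitone_of_injective h.1 h.2⟩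

/-- The exponents `λ + δ` of the alternant attached to the partition `λ`. -/
def shiftedPart (l : Fin n → Fin n) (j : Fin n) : ℕ := l j + (n - 1 - j)

/-- The numbers `α₁ + 1, …, α_r + 1` of a partition with Frobenius notation `(α | β)`, that is,
the positive values of `l j - j`. -/
def posContents (l : Fin n → Fin n) : Finset (Fin n) :=
  {k | 0 < (k : ℕ) ∧ ∃ j, (l j : ℕ) = j + k}

/-- The exponents `n - 1 ± k`, where `s` is the set of those `k` that take the plus sign. -/
def reflectedExponent (s : Finset (Fin n)) (k : Fin n) : ℕ :=
  if k ∈ s then n - 1 + k else n - 1 - k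

theorem pos_of_mem_posContents {l : Fin n → Fin n} {k : Fin n} (hk : k ∈ posContents l) :
    0 < (k : ℕ) :=
  (mem_filter.1 hk).2.1

theorem mem_iff_lt_reflectedExponent {s : Finset (Fin n)} (hs : ∀ k ∈ s, 0 < (k : ℕ)) {k : Fin n} :
    k ∈ s ↔ n - 1 < reflectedExponent s k := by
  have hpos := hs k
  simp only [reflectedExponent]
  split_ifs with hk <;> grind

theorem reflectedExponent_injective {s : Finset (Fin n)} (hs : ∀ k ∈ s, 0 < (k : ℕ)) :
    Function.Injective (reflectedExponent s) := by
  intro i j hij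
  have hi := hs i
  have hj := hs j
  simp only [reflectedExponent] at hij
  split_ifs at hij <;> grind

theorem strictAnti_shiftedPart {l : Fin n → Fin n} (hl : Antitone l) :
    StrictAnti (shiftedPart l) := fun i j hij => by
  have hle : (l j : ℕ) ≤ l i := hl hij.le
  have : (i : ℕ) < j := hij
  simp only [shiftedPart]
  omega

theorem shiftedPart_eq_reflectedExponent {l : Fin n → Fin n}
    (hinj : Function.Injective (absContent l)) (j : Fin n) :
    shiftedPart l j = reflectedExponent (posContents l) (absContent l j) := by
  have hmem : absContent l j ∈ posContents l ↔ (j : ℕ) < l j := by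
    simp only [posContents, mem_filter_univ, val_absContent]
    refine ⟨fun ⟨hpos, i, hi⟩ => ?_, fun h => ⟨by omega, j, by omega⟩⟩
    obtain rfl : i = j := hinj (Fin.ext (by simp only [val_absContent]; omega))
    omega
  simp only [shiftedPart, reflectedExponent, hmem, val_absContent]
  split_ifs <;> omega

theorem range_shiftedPart {l : Fin n → Fin n} (hinj : Function.Injective (absContent l)) :
    Set.range (shiftedPart l) = Set.range (reflectedExponent (posContents l)) := by
  have hcomp : shiftedPart l = reflectedExponent (posContents l) ∘ absContent l :=
    funext (shiftedPart_eq_reflectedExponent hinj)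
  rw [hcomp, (Finite.injective_iff_surjective.1 hinj).range_comp]

theorem posContents_injOn : Set.InjOn (posContents (n := n)) (frobeniusSet n) := by
  intro l hl l' hl' h
  obtain ⟨hanti, hinj⟩ := mem_frobeniusSet_iff.1 hl
  obtain ⟨hanti', hinj'⟩ := mem_frobeniusSet_iff.1 hl'
  have hparts : OrderDual.toDual ∘ shiftedPart l = OrderDual.toDual ∘ shiftedPart l' := by
    refine (StrictMono.range_inj (strictAnti_shiftedPart hanti).dual_right
      (strictAnti_shiftedPart hanti').dual_right).1 ?_
    rw [Set.range_comp, Set.range_comp, range_shiftedPart hinj, range_shiftedPart hinj', h]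
  ext j
  simpa [shiftedPart] using congrFun hparts j

theorem add_sub_le_of_strictAnti {e : Fin n → ℕ} (he : StrictAnti e) {i j : Fin n} (hij : i ≤ j) :
    e j + (j - i) ≤ e i := by
  have hmaps : Set.MapsTo e (Ico i j) (Ioc (e j) (e i)) := fun k hk => by
    obtain ⟨hik, hkj⟩ := mem_Ico.1 hk
    exact mem_Ioc.2 ⟨he hkj, he.antitone hik⟩
  have hcard := card_le_card_of_injOn e hmaps he.injective.injOn
  rw [Fin.card_Ico, Nat.card_Ioc] at hcard
  have := he.antitone hij
  omega

theorem exists_antitone_shiftedPart_eq {e : Fin n → ℕ} (he : StrictAnti e)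
    (hbound : ∀ j, e j ≤ 2 * (n - 1)) : ∃ l : Fin n → Fin n, Antitone l ∧ shiftedPart l = e := by
  have hlow (j : Fin n) : n - 1 - j ≤ e j := by
    have := add_sub_le_of_strictAnti he (i := j) (j := ⟨n - 1, Nat.sub_one_lt_of_lt j.2⟩)
      (Nat.le_sub_one_of_lt j.2)
    simp only at this
    omega
  have hhigh (j : Fin n) : e j + j ≤ 2 * (n - 1) := by
    have := add_sub_le_of_strictAnti he (i := ⟨0, j.pos⟩) (j := j) (Nat.zero_le _)
    have := hbound ⟨0, j.pos⟩
    simp only at *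
    omega
  refine ⟨fun j => ⟨e j - (n - 1 - j), by have := hlow j; have := hhigh j; omega⟩,
    fun i j hij => ?_, funext fun j => ?_⟩
  · have := add_sub_le_of_strictAnti he hij
    have : (i : ℕ) ≤ j := hij
    simp only [Fin.mk_le_mk]
    omega
  · have := hlow j
    simp only [shiftedPart]
    omega

theorem exists_mem_frobeniusSet_posContents_eq {s : Finset (Fin n)}
    (hs : ∀ k ∈ s, 0 < (k : ℕ)) : ∃ l ∈ frobeniusSet n, posContents l = s := by
  let τ : Equiv.Perm (Fin n) := Tuple.sort (OrderDual.toDual ∘ reflectedExponent s)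
  have hsort : StrictAnti (reflectedExponent s ∘ τ) := fun i j hij =>
    lt_of_le_of_ne (Tuple.monotone_sort (OrderDual.toDual ∘ reflectedExponent s) hij.le)
      (((reflectedExponent_injective hs).comp τ.injective).ne hij.ne')
  have hbound (j : Fin n) : (reflectedExponent s ∘ τ) j ≤ 2 * (n - 1) := by
    simp only [Function.comp_apply, reflectedExponent]
    split_ifs <;> omega
  obtain ⟨l, hanti, hl⟩ := exists_antitone_shiftedPart_eq hsort hbound
  have hcontent (j : Fin n) : (l j : ℕ) + (n - 1 - j) = reflectedExponent s (τ j) := congrFun hl j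
  have habs : absContent l = τ := by
    ext j
    have := hcontent j
    simp only [reflectedExponent] at this
    simp only [val_absContent]
    split_ifs at this <;> omega
  have hinj : Function.Injective (absContent l) := habs ▸ τ.injective
  refine ⟨l, mem_frobeniusSet_iff.2 ⟨hanti, hinj⟩, ?_⟩
  ext k
  obtain ⟨j, rfl⟩ := τ.surjective k
  rw [mem_iff_lt_reflectedExponent hs,
    mem_iff_lt_reflectedExponent fun k hk => pos_of_mem_posContents hk, ← hcontent,
    ← habs, ← shiftedPart_eq_reflectedExponent hinj, shiftedPart]

end Partitions

section Littlewood

variable {n : ℕ} {R : Type*} [CommRing R]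

theorem det_pow_add_pow_reflect_eq_sum (a : R) (x : Fin n → R) :
    (Matrix.of fun i k : Fin n => x i ^ (n - 1 - (k : ℕ)) +
      if 0 < (k : ℕ) then a ^ (k : ℕ) * x i ^ (n - 1 + (k : ℕ)) else 0).det =
    ∑ s ∈ ({k | 0 < (k : ℕ)} : Finset (Fin n)).powerset,
      (∏ k ∈ s, a ^ (k : ℕ)) * (Matrix.of fun i k => x i ^ reflectedExponent s k).det := by
  let low (k i : Fin n) : R := x i ^ (n - 1 - (k : ℕ))
  let high (k i : Fin n) : R := a ^ (k : ℕ) * x i ^ (n - 1 + (k : ℕ))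
  have hcolumns : (Matrix.of fun i k : Fin n => x i ^ (n - 1 - (k : ℕ)) +
      if 0 < (k : ℕ) then a ^ (k : ℕ) * x i ^ (n - 1 + (k : ℕ)) else 0).transpose =
        Matrix.of (({k | 0 < (k : ℕ)} : Finset (Fin n)).piecewise (high + low) low) := by
    ext k i
    by_cases hk : 0 < (k : ℕ) <;> simp [Finset.piecewise, hk, high, low, add_comm]
  rw [← Matrix.det_transpose, hcolumns]
  refine (Matrix.detRowAlternating.toMultilinearMap.map_piecewise_add _ _ _).trans
    (sum_congr rfl fun s _ => ?_)
  have hscaled : Matrix.of (s.piecewise high low) = Matrix.of fun k i =>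
      (if k ∈ s then a ^ (k : ℕ) else 1) *
        (Matrix.of fun i k => x i ^ reflectedExponent s k).transpose k i := by
    ext k i
    by_cases hk : k ∈ s <;> simp [hk, high, low, reflectedExponent]
  change (Matrix.of (s.piecewise high low)).det = _
  rw [hscaled, Matrix.det_mul_column, Matrix.det_transpose, prod_ite_mem, univ_inter]

theorem det_pow_shiftedPart {l : Fin n → Fin n} (hl : l ∈ frobeniusSet n) (x : Fin n → R) :
    (Matrix.of fun i j => x i ^ shiftedPart l j).det = (∏ k ∈ posContents l, (-1) ^ (k : ℕ)) *
      (Matrix.of fun i k => x i ^ reflectedExponent (posContents l) k).det := by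
  obtain ⟨hanti, hinj⟩ := mem_frobeniusSet_iff.1 hl
  let τ := Equiv.ofBijective (absContent l) (Finite.injective_iff_bijective.1 hinj)
  have hτ (k : Fin n) : shiftedPart l (τ.symm k) = reflectedExponent (posContents l) k := by
    rw [shiftedPart_eq_reflectedExponent hinj]
    exact congrArg _ (τ.apply_symm_apply k)
  have hinv (i j : Fin n) (hij : i < j) : τ.symm i < τ.symm j ↔ j ∉ posContents l := by
    rw [← (strictAnti_shiftedPart hanti).lt_iff_gt, hτ, hτ]
    simp only [reflectedExponent]
    rw [Fin.lt_def] at hij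
    split_ifs <;> grind
  have hsign : (Equiv.Perm.sign τ : ℤˣ) = ∏ k ∈ posContents l, (-1) ^ (k : ℕ) := by
    rw [← Equiv.Perm.sign_symm, sign_eq_prod_of_forall_inversion_iff _ _ hinv]
  have hsubmatrix : (Matrix.of fun i j => x i ^ shiftedPart l j) =
      (Matrix.of fun i k => x i ^ reflectedExponent (posContents l) k).submatrix id τ := by
    ext i j
    simp [shiftedPart_eq_reflectedExponent hinj, τ]
  rw [hsubmatrix, Matrix.det_permute', hsign]
  push_cast
  rfl

/-- Littlewood's identity `∑ λ ∈ 𝒫_n, s_λ = ∏ i < j, (1 + x_i x_j)`, multiplied by the Vandermonde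
determinant. -/
theorem sum_frobeniusSet_det_pow_shiftedPart (x : Fin n → R) :
    ∑ l ∈ frobeniusSet n, (Matrix.of fun i j => x i ^ shiftedPart l j).det =
      ∏ i, ∏ j ∈ Ioi i, (x i - x j) * (1 + x i * x j) := by
  have hprod := det_pow_add_pow_reflect (-1) x
  simp only [neg_mul, one_mul, sub_neg_eq_add] at hprod
  rw [← hprod, det_pow_add_pow_reflect_eq_sum]
  refine sum_nbij posContents (fun l _ => ?_) posContents_injOn (fun s hs => ?_)
    fun l hl => det_pow_shiftedPart hl x
  · exact mem_powerset.2 fun k hk => (mem_filter_univ k).2 (pos_of_mem_posContents hk)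
  · exact exists_mem_frobeniusSet_posContents_eq fun k hk =>
      (mem_filter_univ k).1 (mem_powerset.1 hs hk)

theorem sum_frobeniusSet_rowMinor {ι : Type*} [LinearOrder ι] (x : ι → R) {I : Finset ι}
    (hI : #I = n) :
    ∑ l ∈ frobeniusSet n, rowMinor (Matrix.of fun i j => x i ^ shiftedPart l j) I =
      ∏ i ∈ I, ∏ j ∈ I with i < j, (x i - x j) * (1 + x i * x j) := by
  simp only [rowMinor, hI, dite_true]
  rw [← prod_prod_Ioi_orderEmbOfFin I hI]
  exact sum_frobeniusSet_det_pow_shiftedPart fun p => x (I.orderEmbOfFin hI p)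

end Littlewood

theorem altDet_eq_sum_rowMinor_mul_rowMinor {R : Type*} [CommRing R] {n : ℕ} (α β : Fin n → ℕ)
    (x a : Fin (2 * n) → R) :
    altDet n α β x a = ∑ I ∈ univ.powersetCard n (α := Fin (2 * n)),
      (-1) ^ (∑ i ∈ I, ((i : ℕ) + 1) + n * (n + 1) / 2) * (∏ i ∈ I, a i) *
        rowMinor (Matrix.of fun i j => x i ^ α j) I *
        rowMinor (Matrix.of fun i j => x i ^ β j) Iᶜ := by
  have hblocks : altDet n α β x a =
      ((Matrix.fromCols (Matrix.of fun i j => a i * Matrix.of (fun i j => x i ^ α j) i j)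
        (Matrix.of fun i j => x i ^ β j)).submatrix id (blockEquiv (two_mul n).symm).symm).det := by
    refine congrArg Matrix.det (Matrix.ext fun i j => ?_)
    obtain ⟨p | p, rfl⟩ := (blockEquiv (two_mul n).symm).surjective j <;> simp
  rw [hblocks, det_fromCols_eq_sum_rowMinor_mul_rowMinor]
  exact sum_congr rfl fun I _ => by rw [rowMinor_mul_column, mul_assoc _ (∏ i ∈ I, a i)]

/-- Proposition `Laplace`:
`U^n(X;A) = Σ_{I ⊆ [2n], |I| = n} (−1)^{Σ_{i∈I} i + n(n+1)/2} a_I ·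
  Π_{i<j ∈ I}(x_i − x_j)(1 + x_i x_j) · Π_{i<j ∈ Iᶜ}(x_i − x_j)(1 + x_i x_j)`,
with 1-indexed elements (so each `i ∈ I` contributes `i + 1` for 0-indexed `i`). -/
theorem Un_laplace (R : Type*) [CommRing R] (n : ℕ) (hn : 1 ≤ n)
    (x a : Fin (2 * n) → R) :
    Un n x a =
      ∑ I ∈ Finset.univ.powersetCard n (α := Fin (2 * n)),
        (-1 : R) ^ ((∑ i ∈ I, ((i : ℕ) + 1)) + n * (n + 1) / 2) *
          (∏ i ∈ I, a i) *
          (∏ i ∈ I, ∏ j ∈ I.filter (fun j => i < j), (x i - x j) * (1 + x i * x j)) *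
          (∏ i ∈ Iᶜ, ∏ j ∈ Iᶜ.filter (fun j => i < j), (x i - x j) * (1 + x i * x j)) := by
  calc Un n x a
    _ = ∑ l ∈ frobeniusSet n, ∑ m ∈ frobeniusSet n, altDet n (shiftedPart l) (shiftedPart m) x a :=
      rfl
    _ = ∑ I ∈ univ.powersetCard n (α := Fin (2 * n)),
          (-1) ^ (∑ i ∈ I, ((i : ℕ) + 1) + n * (n + 1) / 2) * (∏ i ∈ I, a i) *
            (∑ l ∈ frobeniusSet n, rowMinor (Matrix.of fun i j => x i ^ shiftedPart l j) I) *
            (∑ m ∈ frobeniusSet n, rowMinor (Matrix.of fun i j => x i ^ shiftedPart m j) Iᶜ) := by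
      simp only [altDet_eq_sum_rowMinor_mul_rowMinor]
      rw [sum_congr rfl fun _ _ => sum_comm, sum_comm]
      simp only [← mul_sum, ← sum_mul]
    _ = _ := sum_congr rfl fun I hI => by
      have hcard : #I = n := (mem_powersetCard.1 hI).2
      have hcardc : #Iᶜ = n := by
        rw [card_compl, Fintype.card_fin, hcard, two_mul, Nat.add_sub_cancel]
      rw [sum_frobeniusSet_rowMinor x hcard, sum_frobeniusSet_rowMinor x hcardc]
end
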